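/- The following three statements are equivalent: (1) for all integers d ≥ 1 and q ≥ 1, every continuous map f : Δ^{(d+1)(q-1)} → ℝ^d has at least ((q−1)!)^d Tverberg partitions (Sierksma's conjecture); (2) for all d ≥ 1 and q ≥ 1, every continuous map f : Δ_d^{(d+1)(q-1)} → ℝ^d has at least ((q−1)!)^d Tverberg partitions; (3) for all d ≥ 1 and q ≥ 1, every continuous map f : Δ_{d-1}^{(d+1)(q-1)} → ℝ^d has at least ((q−1)!)^d winding partitions. -/

import Mathlib

/-!
Passing to maps on skeleta costs nothing for Tverberg partitions: after a perturbation into general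
position, which creates no new partitions, codimension counts force all members of a partition to
have at most `d + 1` vertices. A winding partition is a Tverberg partition because an extension of
`f` from `∂σ_S` to `σ_S` that avoids `p` would contract `f|∂σ_S` in the complement of `p`.

For the remaining implication, from Tverberg partitions in dimension `d + 1` to winding partitions
in dimension `d`, let `f` be in general position on the simplex with `(d + 1) * a + 1` vertices,
where `a = q - 1`, and add `a` apex vertices. At a point with base coordinates `y` and total apex
weight `w`, the lifted map is `F = (η, E (η, y / (1 - w)))` with the height
`η = ∑ i, r ^ i * y i - M * bump y + C * w`, where `bump` vanishes on the `(d - 1)`-skeleton and is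
positive in the interiors of the `d`-faces, `r` is small and `M` and `C` are large. The maps
`E (η, ·)` agree with `f` on the `(d - 1)`-skeleton and interpolate, between the finitely many
heights of coincidences `p` of `f`, extensions of `f` that avoid `p` on all `d`-faces around whose
boundary `f` does not wind. Among `a + 1` disjoint faces one contains no apex, which makes the
height of a common point at most `1`; points of such height have most of their weight in the base.
There the base parts hit `p`, and the `d`-faces hit it only because `f` winds around `p`, so the
base parts form a winding partition. Apex weight only raises the height, and the interiors of
`d`-faces lie too deep to take part without it; hence a face without apex can only be the one
containing the smallest vertex of the members with at most `d` vertices. All other faces have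
exactly one apex each, so at most `a!` Tverberg partitions of `F` lie over a winding partition of
`f`, and dividing `(a!) ^ (d + 1)` by `a!` gives the bound.
-/

open scoped BigOperators

noncomputable section

/-- Euclidean space `ℝ^d`. -/
abbrev Euc (d : ℕ) : Type := EuclideanSpace ℝ (Fin d)

/-- The standard `N`-simplex `Δ^N ⊆ ℝ^{N+1}`. -/
def stdSimp (N : ℕ) : Set (Fin (N+1) → ℝ) :=
  {x | (∀ i, 0 ≤ x i) ∧ ∑ i, x i = 1}

/-- The face `σ_S` of `Δ^N` spanned by the vertices in `S`. -/
def simpFace {N : ℕ} (S : Finset (Fin (N+1))) : Set (Fin (N+1) → ℝ) :=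
  {x ∈ stdSimp N | ∀ i ∉ S, x i = 0}

/-- The `k`-skeleton `Δ_k^N` of the standard `N`-simplex. -/
def skel (N k : ℕ) : Set (Fin (N+1) → ℝ) :=
  {x ∈ stdSimp N | {i | x i ≠ 0}.ncard ≤ k + 1}

/-- A Tverberg partition for (the relevant restriction of) `f`: a set of `q`
pairwise disjoint nonempty vertex subsets whose faces have images with a common point. -/
def IsTverbergPartition (q : ℕ) {N d : ℕ}
    (f : (Fin (N+1) → ℝ) → Euc d) (P : Finset (Finset (Fin (N+1)))) : Prop :=
  P.card = q ∧ (∀ S ∈ P, S.Nonempty) ∧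
  (∀ S ∈ P, ∀ T ∈ P, S ≠ T → Disjoint S T) ∧
  (⋂ S ∈ P, f '' simpFace S).Nonempty

/-- The boundary `∂σ_S` of the face `σ_S`. -/
def simpFaceBoundary {N : ℕ} (S : Finset (Fin (N+1))) : Set (Fin (N+1) → ℝ) :=
  {x ∈ simpFace S | ∃ i ∈ S, x i = 0}

/-- `p ∈ W_{≠0}(f|_{∂σ_S})`: either `p` is in the image of the boundary, or the
corestriction of `f|_{∂σ_S}` to `ℝ^d \ {p}` is not nullhomotopic (there is no
continuous map agreeing with `f` on `∂σ_S` that is homotopic to a constant). -/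
def InWne (d : ℕ) {N : ℕ} (f : (Fin (N+1) → ℝ) → Euc d)
    (S : Finset (Fin (N+1))) (p : Euc d) : Prop :=
  p ∈ f '' simpFaceBoundary S ∨
  ¬ ∃ (g : C(↥(simpFaceBoundary S), ↥({p}ᶜ : Set (Euc d))))
      (y : ↥({p}ᶜ : Set (Euc d))),
      (∀ x : ↥(simpFaceBoundary S), (g x : Euc d) = f ↑x) ∧
      g.Homotopic (ContinuousMap.const _ y)

/-- A winding partition (in dimension `d`) for `f` defined on the `(d-1)`-skeleton:
`q` pairwise disjoint nonempty vertex subsets, each of size at most `d+1`, together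
with a winding point `p`. -/
def IsWindingPartition (d q : ℕ) {N : ℕ}
    (f : (Fin (N+1) → ℝ) → Euc d) (P : Finset (Finset (Fin (N+1)))) : Prop :=
  P.card = q ∧ (∀ S ∈ P, S.Nonempty) ∧ (∀ S ∈ P, S.card ≤ d + 1) ∧
  (∀ S ∈ P, ∀ T ∈ P, S ≠ T → Disjoint S T) ∧
  ∃ p : Euc d, ∀ S ∈ P,
    (S.card ≤ d → p ∈ f '' simpFace S) ∧
    (S.card = d + 1 → InWne d f S p)

section

open Set Topology

section Faces

variable {N k : ℕ} {S : Finset (Fin (N + 1))} {x : Fin (N + 1) → ℝ} {v : Fin (N + 1)}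

lemma isCompact_stdSimp (N : ℕ) : IsCompact (stdSimp N) := isCompact_stdSimplex ℝ (Fin (N + 1))

lemma isClosed_simpFace (S : Finset (Fin (N + 1))) : IsClosed (simpFace S) := by
  have : simpFace S = stdSimp N ∩ ⋂ i ∈ {i | i ∉ S}, {x : Fin (N + 1) → ℝ | x i = 0} := by
    ext x; simp [simpFace]
  rw [this]
  exact (isClosed_stdSimplex ℝ (Fin (N + 1))).inter
    (isClosed_biInter fun i _ => isClosed_eq (continuous_apply i) continuous_const)

lemma isCompact_simpFace (S : Finset (Fin (N + 1))) : IsCompact (simpFace S) :=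
  (isCompact_stdSimp N).of_isClosed_subset (isClosed_simpFace S) fun _ h => h.1

lemma isCompact_simpFaceBoundary (S : Finset (Fin (N + 1))) : IsCompact (simpFaceBoundary S) := by
  have : simpFaceBoundary S = ⋃ i ∈ (S : Set (Fin (N + 1))), simpFace S ∩ {x | x i = 0} := by
    ext x; simp [simpFaceBoundary]
  rw [this]
  exact S.finite_toSet.isCompact_biUnion fun i _ =>
    (isCompact_simpFace S).inter_right (isClosed_eq (continuous_apply i) continuous_const)

lemma convex_simpFace (S : Finset (Fin (N + 1))) : Convex ℝ (simpFace S) := by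
  intro x hx y hy a b ha hb hab
  refine ⟨convex_stdSimplex ℝ _ hx.1 hy.1 ha hb hab, fun i hi => ?_⟩
  simp [hx.2 i hi, hy.2 i hi]

lemma simpFace_nonempty (hS : S.Nonempty) : (simpFace S).Nonempty := by
  obtain ⟨v, hv⟩ := hS
  refine ⟨Pi.single v 1, single_mem_stdSimplex ℝ v, fun i hi => ?_⟩
  exact Pi.single_eq_of_ne (fun h : i = v => hi (h ▸ hv)) _

lemma sum_eq_one_of_mem_simpFace (hx : x ∈ simpFace S) : ∑ i ∈ S, x i = 1 := by
  rw [← hx.1.2]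
  exact Finset.sum_subset (Finset.subset_univ S) fun i _ hi => hx.2 i hi

lemma nonempty_of_mem_simpFace (hx : x ∈ simpFace S) : S.Nonempty := by
  rw [Finset.nonempty_iff_ne_empty]
  rintro rfl
  simpa using sum_eq_one_of_mem_simpFace hx

lemma mem_simpFace_erase (hx : x ∈ simpFace S) (hv : x v = 0) : x ∈ simpFace (S.erase v) := by
  refine ⟨hx.1, fun i hi => ?_⟩
  by_cases h : i = v
  · rw [h, hv]
  · exact hx.2 i fun hS => hi (Finset.mem_erase.2 ⟨h, hS⟩)

lemma mem_simpFace_inter {T : Finset (Fin (N + 1))} (hS : x ∈ simpFace S) (hT : x ∈ simpFace T) :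
    x ∈ simpFace (S ∩ T) := by
  refine ⟨hS.1, fun i hi => ?_⟩
  by_cases h : i ∈ S
  · exact hT.2 i fun h' => hi (Finset.mem_inter.2 ⟨h, h'⟩)
  · exact hS.2 i h

lemma mem_simpFaceBoundary_of_mem_simpFace {T : Finset (Fin (N + 1))} (hS : x ∈ simpFace S)
    (hT : x ∈ simpFace T) (hST : ¬ S ⊆ T) : x ∈ simpFaceBoundary S := by
  obtain ⟨v, hvS, hvT⟩ := Finset.not_subset.1 hST
  exact ⟨hS, v, hvS, hT.2 v hvT⟩

lemma simpFace_subset_skel (hS : S.card ≤ k + 1) : simpFace S ⊆ skel N k := by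
  intro x hx
  have hsupp : {i | x i ≠ 0} ⊆ (S : Set (Fin (N + 1))) := fun i hi => by
    by_contra h
    exact hi (hx.2 i h)
  exact ⟨hx.1, (Set.ncard_le_ncard hsupp).trans (by simpa using hS)⟩

lemma simpFaceBoundary_subset_skel (hS : S.card ≤ k + 2) : simpFaceBoundary S ⊆ skel N k := by
  rintro x ⟨hx, v, hv, hxv⟩
  refine simpFace_subset_skel ?_ (mem_simpFace_erase hx hxv)
  rw [Finset.card_erase_of_mem hv]
  omega

lemma mem_skel_iff :
    x ∈ skel N k ↔ ∃ S : Finset (Fin (N + 1)), S.card ≤ k + 1 ∧ x ∈ simpFace S := by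
  constructor
  · intro hx
    refine ⟨Finset.univ.filter fun i => x i ≠ 0, ?_, hx.1, fun i hi => by simpa using hi⟩
    rw [← Set.ncard_coe_finset]
    simpa using hx.2
  · rintro ⟨S, hS, hx⟩
    exact simpFace_subset_skel hS hx

lemma isClosed_skel (N k : ℕ) : IsClosed (skel N k) := by
  have : skel N k = ⋃ S : {S : Finset (Fin (N + 1)) // S.card ≤ k + 1}, simpFace S.1 := by
    ext x; simp [mem_skel_iff]
  rw [this]
  exact isClosed_iUnion_of_finite fun S => isClosed_simpFace S.1

lemma skel_mono (N : ℕ) {k l : ℕ} (h : k ≤ l) : skel N k ⊆ skel N l :=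
  fun _ hx => ⟨hx.1, hx.2.trans (by omega)⟩

end Faces

section DisjointFamilies

variable {α : Type*} {P Q : Finset (Finset α)} {S T : Finset α}

/-- A family of pairwise disjoint nonempty finite sets. Tverberg and winding partitions are such
families of vertex sets. -/
structure IsDisjointFamily (P : Finset (Finset α)) : Prop where
  nonempty : ∀ S ∈ P, S.Nonempty
  disjoint : ∀ S ∈ P, ∀ T ∈ P, S ≠ T → Disjoint S T

lemma IsDisjointFamily.subset (hP : IsDisjointFamily P) (h : Q ⊆ P) : IsDisjointFamily Q :=
  ⟨fun S hS => hP.nonempty S (h hS), fun S hS T hT => hP.disjoint S (h hS) T (h hT)⟩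

lemma IsDisjointFamily.insert [DecidableEq α] (hP : IsDisjointFamily P) (hS : S.Nonempty)
    (h : ∀ T ∈ P, Disjoint S T) : IsDisjointFamily (insert S P) := by
  refine ⟨(Finset.forall_mem_insert _ _ _).2 ⟨hS, hP.nonempty⟩, fun T hT U hU hTU => ?_⟩
  rcases Finset.mem_insert.1 hT with hTS | hTP <;> rcases Finset.mem_insert.1 hU with hUS | hUP
  · exact absurd (hTS.trans hUS.symm) hTU
  · exact hTS ▸ h U hUP
  · exact hUS ▸ (h T hTP).symm
  · exact hP.disjoint T hTP U hUP hTU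

lemma notMem_of_forall_disjoint (hS : S.Nonempty) (h : ∀ T ∈ P, Disjoint S T) : S ∉ P :=
  fun hSP => hS.ne_empty (disjoint_self.1 (h S hSP))

lemma IsDisjointFamily.eq_of_mem (hP : IsDisjointFamily P) (hS : S ∈ P) (hT : T ∈ P) {v : α}
    (hvS : v ∈ S) (hvT : v ∈ T) : S = T := by
  by_contra h
  exact Finset.disjoint_left.1 (hP.disjoint S hS T hT h) hvS hvT

lemma IsDisjointFamily.sum_card_le [Fintype α] (hP : IsDisjointFamily P) :
    ∑ S ∈ P, S.card ≤ Fintype.card α := by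
  classical
  exact (Finset.card_biUnion (t := id) fun S hS T hT => hP.disjoint S hS T hT).ge.trans
    (Finset.card_le_univ _)

/-- The expected codimension in `ℝ^d` of the intersection of the images of the faces spanned by
the members of `P`: a face with vertex set `S` has codimension `d + 1 - |S|`. -/
def totalCodim (d : ℕ) (P : Finset (Finset α)) : ℤ := ∑ S ∈ P, ((d : ℤ) + 1 - S.card)

variable {d : ℕ}

lemma totalCodim_eq (d : ℕ) (P : Finset (Finset α)) :
    totalCodim d P = (d + 1) * P.card - (∑ S ∈ P, S.card : ℕ) := by
  simp [totalCodim, Finset.sum_sub_distrib, mul_comm]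

lemma totalCodim_insert [DecidableEq α] (h : S ∉ P) :
    totalCodim d (insert S P) = (d + 1 - S.card) + totalCodim d P := Finset.sum_insert h

lemma IsDisjointFamily.le_totalCodim [Fintype α] (hP : IsDisjointFamily P) {a : ℕ}
    (hcard : P.card = a + 1) (hα : Fintype.card α ≤ (d + 1) * a + 1) : d ≤ totalCodim d P := by
  have hsum : ((∑ S ∈ P, S.card : ℕ) : ℤ) ≤ (d + 1) * a + 1 :=
    mod_cast hP.sum_card_le.trans hα
  rw [totalCodim_eq, hcard]
  push_cast at hsum ⊢
  linarith

/-- The members of `P` spanning faces of dimension less than `d`. -/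
def smallMembers (d : ℕ) (P : Finset (Finset α)) : Finset (Finset α) := P.filter (·.card ≤ d)

lemma mem_smallMembers : S ∈ smallMembers d P ↔ S ∈ P ∧ S.card ≤ d := Finset.mem_filter

lemma IsDisjointFamily.smallMembers (hP : IsDisjointFamily P) :
    IsDisjointFamily (smallMembers d P) := hP.subset (Finset.filter_subset _ _)

lemma totalCodim_le_smallMembers (d : ℕ) (P : Finset (Finset α)) :
    totalCodim d P ≤ totalCodim d (smallMembers d P) := by
  rw [totalCodim, ← Finset.sum_filter_add_sum_filter_not P (·.card ≤ d)]
  refine add_le_of_nonpos_right (Finset.sum_nonpos fun S hS => ?_)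
  have := (Finset.mem_filter.1 hS).2
  omega

lemma card_le_of_totalCodim_smallMembers_le
    (h : totalCodim d (smallMembers d P) ≤ totalCodim d P) (hS : S ∈ P) : S.card ≤ d + 1 := by
  by_contra hSd
  refine h.not_gt ?_
  rw [totalCodim, ← Finset.sum_filter_add_sum_filter_not P (·.card ≤ d)]
  refine add_lt_of_neg_right _ (Finset.sum_neg' (fun T hT => ?_)
    ⟨S, Finset.mem_filter.2 ⟨hS, by omega⟩, by omega⟩)
  have := (Finset.mem_filter.1 hT).2
  omega

lemma smallMembers_nonempty (hd : 1 ≤ d) (hP : d ≤ totalCodim d P) :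
    (smallMembers d P).Nonempty := by
  rw [Finset.nonempty_iff_ne_empty]
  intro h
  have := hP.trans (totalCodim_le_smallMembers d P)
  rw [h, totalCodim, Finset.sum_empty] at this
  omega

end DisjointFamilies

section CommonPoints

variable {N d q : ℕ} {f : (Fin (N + 1) → ℝ) → Euc d} {P : Finset (Finset (Fin (N + 1)))}

/-- The points lying in the images of all faces spanned by the members of `P`. -/
def commonPoints (f : (Fin (N + 1) → ℝ) → Euc d) (P : Finset (Finset (Fin (N + 1)))) :
    Set (Euc d) := ⋂ S ∈ P, f '' simpFace S

lemma mem_commonPoints {p : Euc d} : p ∈ commonPoints f P ↔ ∀ S ∈ P, p ∈ f '' simpFace S :=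
  mem_iInter₂

lemma isTverbergPartition_iff : IsTverbergPartition q f P ↔
    P.card = q ∧ IsDisjointFamily P ∧ (commonPoints f P).Nonempty :=
  ⟨fun ⟨hq, hne, hdisj, h⟩ => ⟨hq, ⟨hne, hdisj⟩, h⟩,
    fun ⟨hq, hP, h⟩ => ⟨hq, hP.nonempty, hP.disjoint, h⟩⟩

/-- The condition that a winding partition with winding point `p` imposes on its member `S`. -/
def HitsOrWinds (d : ℕ) (f : (Fin (N + 1) → ℝ) → Euc d) (S : Finset (Fin (N + 1)))
    (p : Euc d) : Prop :=
  (S.card ≤ d → p ∈ f '' simpFace S) ∧ (S.card = d + 1 → InWne d f S p)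

lemma isWindingPartition_iff : IsWindingPartition d q f P ↔
    P.card = q ∧ IsDisjointFamily P ∧ (∀ S ∈ P, S.card ≤ d + 1) ∧
      ∃ p, ∀ S ∈ P, HitsOrWinds d f S p :=
  ⟨fun ⟨hq, hne, hcard, hdisj, h⟩ => ⟨hq, ⟨hne, hdisj⟩, hcard, h⟩,
    fun ⟨hq, hP, hcard, h⟩ => ⟨hq, hP.nonempty, hcard, hP.disjoint, h⟩⟩

/-- General position of the images of disjoint faces: families of expected codimension greater
than `d` have no common point, families of expected codimension `d` have finitely many. -/
structure GenPos (d : ℕ) (f : (Fin (N + 1) → ℝ) → Euc d) : Prop where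
  totalCodim_le : ∀ P, IsDisjointFamily P → (commonPoints f P).Nonempty → totalCodim d P ≤ d
  finite_coincidences : ∀ P, IsDisjointFamily P → totalCodim d P = d →
    {y | ∃ S ∈ P, y ∈ simpFace S ∧ f y ∈ commonPoints f P}.Finite

variable {p : Euc d}

lemma GenPos.totalCodim_smallMembers (hf : GenPos d f) (hP : IsDisjointFamily P)
    (hd : d ≤ totalCodim d P) (hp : p ∈ commonPoints f (smallMembers d P)) :
    totalCodim d (smallMembers d P) = d :=
  (hf.totalCodim_le _ hP.smallMembers ⟨p, hp⟩).antisymm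
    (hd.trans (totalCodim_le_smallMembers d P))

lemma GenPos.card_le (hf : GenPos d f) (hP : IsDisjointFamily P) (hd : d ≤ totalCodim d P)
    (hp : p ∈ commonPoints f (smallMembers d P)) {S : Finset (Fin (N + 1))} (hS : S ∈ P) :
    S.card ≤ d + 1 :=
  card_le_of_totalCodim_smallMembers_le
    ((hf.totalCodim_smallMembers hP hd hp).le.trans hd) hS

-- Otherwise `S.erase v` could replace `S`, which would raise the expected codimension above `d`.
lemma GenPos.pos_of_mem_commonPoints_erase (hf : GenPos d f) (hP : IsDisjointFamily P)
    (hd : d ≤ totalCodim d P) {S : Finset (Fin (N + 1))} (hS : S ∈ P)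
    {x : Fin (N + 1) → ℝ} (hx : x ∈ simpFace S) (hxP : f x ∈ commonPoints f (P.erase S))
    {v : Fin (N + 1)} (hv : v ∈ S) : 0 < x v := by
  refine (hx.1.1 v).lt_of_ne fun hxv => ?_
  have hxe := mem_simpFace_erase hx hxv.symm
  have hne := nonempty_of_mem_simpFace hxe
  have hdisj : ∀ T ∈ P.erase S, Disjoint (S.erase v) T := fun T hT =>
    (hP.disjoint S hS T (Finset.mem_of_mem_erase hT) (Finset.ne_of_mem_erase hT).symm).mono_left
      (Finset.erase_subset v S)
  have hle := hf.totalCodim_le _ ((hP.subset (Finset.erase_subset S P)).insert hne hdisj)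
    ⟨f x, mem_commonPoints.2 <| (Finset.forall_mem_insert _ _ _).2
      ⟨mem_image_of_mem f hxe, mem_commonPoints.1 hxP⟩⟩
  rw [← Finset.insert_erase hS, totalCodim_insert (Finset.notMem_erase S P)] at hd
  rw [totalCodim_insert (notMem_of_forall_disjoint hne hdisj)] at hle
  have := Finset.card_erase_add_one hv
  omega

end CommonPoints

section Extension

universe u v

variable {X : Type u} {Y : Type v} [TopologicalSpace X] [TopologicalSpace Y]
  [TietzeExtension.{u, v} Y]

lemma exists_continuousMap_eqOn [NormalSpace X] {A : Set X} (hA : IsClosed A) {f : X → Y}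
    (hf : ContinuousOn f A) : ∃ g : C(X, Y), EqOn g f A := by
  obtain ⟨g, hg⟩ := ContinuousMap.exists_restrict_eq hA ⟨A.domRestrict f, hf.domRestrict⟩
  exact ⟨g, fun x hx => DFunLike.congr_fun hg ⟨x, hx⟩⟩

lemma exists_continuousMap_prod_unitInterval [NormalSpace (X × unitInterval)] {A : Set X}
    (hA : IsClosed A) (H : C(unitInterval × A, Y)) (φ : C(X, Y)) (hHφ : ∀ x : A, H (1, x) = φ x) :
    ∃ L : C(X × unitInterval, Y), (∀ (x : A) t, L (x, t) = H (t, x)) ∧ ∀ x, L (x, 1) = φ x := by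
  classical
  have hAI : IsClosed {z : X × unitInterval | z.1 ∈ A} := hA.preimage continuous_fst
  have hX1 : IsClosed {z : X × unitInterval | z.2 = 1} :=
    isClosed_eq continuous_snd continuous_const
  let k : X × unitInterval → Y := fun z => if h : z.1 ∈ A then H (z.2, ⟨z.1, h⟩) else φ z.1
  have hk_one : ∀ x, k (x, 1) = φ x := fun x => by
    by_cases h : x ∈ A
    · exact (dif_pos h).trans (hHφ ⟨x, h⟩)
    · exact dif_neg h
  have hkA : ContinuousOn k {z | z.1 ∈ A} := by
    rw [continuousOn_iff_continuous_domRestrict]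
    have : ({z | z.1 ∈ A} : Set _).domRestrict k = fun z => H (z.1.2, ⟨z.1.1, z.2⟩) :=
      funext fun z => dif_pos z.2
    rw [this]
    fun_prop
  have hk1 : ContinuousOn k {z | z.2 = 1} := by
    refine (by fun_prop : ContinuousOn (fun z : X × unitInterval => φ z.1) _).congr ?_
    rintro ⟨x, t⟩ (rfl : t = 1)
    exact hk_one x
  obtain ⟨L, hL⟩ := exists_continuousMap_eqOn (hAI.union hX1)
    (hkA.union_of_isClosed hk1 hAI hX1)
  exact ⟨L, fun x t => (hL (Or.inl x.2)).trans (dif_pos x.2),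
    fun x => (hL (Or.inr rfl)).trans (hk_one x)⟩

variable [NormalSpace X]

lemma exists_continuousMap_eqOn_of_finite_closed [Nonempty Y] {ι : Type*} [Finite ι]
    {F : ι → Set X} (hF : ∀ i, IsClosed (F i)) {φ : ι → X → Y}
    (hφ : ∀ i, ContinuousOn (φ i) (F i))
    (hcompat : ∀ i j, EqOn (φ i) (φ j) (F i ∩ F j)) :
    ∃ g : C(X, Y), ∀ i, EqOn g (φ i) (F i) := by
  classical
  let glued : X → Y := fun x => if h : ∃ i, x ∈ F i then φ h.choose x else Classical.arbitrary Y
  have hglued : ∀ i, EqOn glued (φ i) (F i) := fun i x hx => by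
    have h : ∃ i, x ∈ F i := ⟨i, hx⟩
    exact (dif_pos h).trans (hcompat _ i ⟨h.choose_spec, hx⟩)
  obtain ⟨g, hg⟩ := exists_continuousMap_eqOn (isClosed_iUnion_of_finite hF)
    ((locallyFinite_of_finite F).continuousOn_iUnion hF fun i => (hφ i).congr (hglued i))
  exact ⟨g, fun i x hx => (hg (mem_iUnion_of_mem i hx)).trans (hglued i hx)⟩

-- An extension of the homotopy takes values in `U` over a neighbourhood of `A`; a Urysohn
-- function then leads from time `0` on `A` to time `1` outside that neighbourhood.
lemma exists_extension_of_homotopic [NormalSpace (X × unitInterval)] {A : Set X}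
    (hA : IsClosed A) {U : Set Y} (hU : IsOpen U) {g₀ g₁ : C(A, U)} (hg : g₀.Homotopic g₁)
    {φ₁ : C(X, U)} (hφ₁ : ∀ x : A, φ₁ x = g₁ x) :
    ∃ φ₀ : C(X, U), ∀ x : A, φ₀ x = g₀ x := by
  obtain ⟨H⟩ := hg
  obtain ⟨L, hLA, hL1⟩ := exists_continuousMap_prod_unitInterval hA
    ⟨fun z => (H z : Y), by fun_prop⟩ ⟨fun x => (φ₁ x : Y), by fun_prop⟩ fun x => by simp [hφ₁]
  let bad : Set X := Prod.fst '' {z : X × unitInterval | L z ∉ U}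
  have hbad : IsClosed bad :=
    isClosedMap_fst_of_compactSpace _ (hU.isClosed_compl.preimage L.continuous)
  have hAbad : Disjoint A bad := by
    rw [Set.disjoint_left]
    rintro x hx ⟨⟨_, t⟩, ht, rfl⟩
    exact ht (by rw [hLA ⟨_, hx⟩]; exact Subtype.coe_prop _)
  obtain ⟨u, hu0, hu1, hu⟩ := exists_continuous_zero_one_of_isClosed hA hbad hAbad
  have hLU : ∀ x, L (x, ⟨u x, hu x⟩) ∈ U := fun x => by
    by_cases hx : x ∈ bad
    · rw [show (⟨u x, hu x⟩ : unitInterval) = 1 from Subtype.ext (hu1 hx), hL1]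
      exact (φ₁ x).2
    · by_contra h
      exact hx ⟨_, h, rfl⟩
  refine ⟨⟨fun x => ⟨L (x, ⟨u x, hu x⟩), hLU x⟩, by fun_prop⟩, fun x => Subtype.ext ?_⟩
  have hux : (⟨u x, hu x⟩ : unitInterval) = 0 := Subtype.ext (hu0 x.2)
  simp only [ContinuousMap.coe_mk, hux, hLA, H.apply_zero]

end Extension

section Winding

variable {N d : ℕ} {f φ : (Fin (N + 1) → ℝ) → Euc d} {S : Finset (Fin (N + 1))} {p : Euc d}

lemma exists_extension_of_not_inWne (h : ¬ InWne d f S p) :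
    ∃ φ : C(Fin (N + 1) → ℝ, Euc d), EqOn φ f (simpFaceBoundary S) ∧ ∀ x, φ x ≠ p := by
  simp only [InWne, not_or, not_not] at h
  obtain ⟨-, g, y, hgf, hg⟩ := h
  obtain ⟨φ, hφ⟩ := exists_extension_of_homotopic (isCompact_simpFaceBoundary S).isClosed
    isOpen_compl_singleton hg (φ₁ := ContinuousMap.const _ y) fun _ => rfl
  exact ⟨⟨fun x => φ x, by fun_prop⟩,
    fun x hx => (congrArg Subtype.val (hφ ⟨x, hx⟩)).trans (hgf ⟨x, hx⟩), fun x => (φ x).2⟩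

-- Since `σ_S` is contractible, an extension to `σ_S` avoiding `p` makes the boundary map
-- nullhomotopic.
lemma InWne.mem_image_simpFace (h : InWne d f S p) (hS : S.Nonempty)
    (hφ : ContinuousOn φ (simpFace S)) (hφf : EqOn φ f (simpFaceBoundary S)) :
    p ∈ φ '' simpFace S := by
  by_contra hp
  have hφp : ∀ x : simpFace S, φ x ∈ ({p}ᶜ : Set (Euc d)) := fun x hx => hp ⟨x, x.2, hx⟩
  refine h.elim (fun ⟨x, hx, hxp⟩ => hp ⟨x, hx.1, (hφf hx).trans hxp⟩) fun h => h ?_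
  let ψ : C(simpFace S, ({p}ᶜ : Set (Euc d))) :=
    ⟨fun x => ⟨φ x, hφp x⟩, hφ.domRestrict.subtype_mk _⟩
  let incl : C(simpFaceBoundary S, simpFace S) := ⟨inclusion fun _ hx => hx.1, by fun_prop⟩
  have := (convex_simpFace S).contractibleSpace (simpFace_nonempty hS)
  obtain ⟨y, hy⟩ := ((id_nullhomotopic (simpFace S)).comp_left incl).comp_right ψ
  exact ⟨_, y, fun x => hφf x.2, hy⟩

end Winding

section Transversality

variable {Θ V W : Type*}
  [NormedAddCommGroup Θ] [NormedSpace ℝ Θ]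
  [NormedAddCommGroup V] [NormedSpace ℝ V] [FiniteDimensional ℝ V]
  [NormedAddCommGroup W] [NormedSpace ℝ W]

lemma det_ne_zero_iff_surjective (A : V →L[ℝ] V) : A.det ≠ 0 ↔ Function.Surjective A := by
  rw [← isUnit_iff_ne_zero, ContinuousLinearMap.det, ← LinearMap.isUnit_iff_isUnit_det,
    LinearMap.isUnit_iff_range_eq_top, LinearMap.range_eq_top]
  rfl

lemma isOpen_setOf_surjective : IsOpen {A : W →L[ℝ] V | Function.Surjective A} := by
  refine isOpen_iff_mem_nhds.2 fun A hA => ?_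
  obtain ⟨R, hR⟩ := A.toLinearMap.exists_rightInverse_of_surjective (LinearMap.range_eq_top.2 hA)
  let R' : V →L[ℝ] W := LinearMap.toContinuousLinearMap R
  have hcont : Continuous fun B : W →L[ℝ] V => (B.comp R').det :=
    ContinuousLinearMap.continuous_det.comp (continuous_id.clm_comp continuous_const)
  have hAR : (A.comp R').det ≠ 0 := (det_ne_zero_iff_surjective _).2 fun v =>
    ⟨v, LinearMap.congr_fun hR v⟩
  filter_upwards [hcont.continuousAt.eventually_ne hAR] with B hB
  exact Function.Surjective.of_comp ((det_ne_zero_iff_surjective (B.comp R')).1 hB)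

lemma isOpen_setOf_forall_mem_regular {Ψ : Θ × W → V} (hΨ : ContDiff ℝ 1 Ψ) {K : Set W}
    (hK : IsCompact K) :
    IsOpen {t | ∀ w ∈ K, Ψ (t, w) = 0 →
      Function.Surjective (fderiv ℝ (fun w => Ψ (t, w)) w)} := by
  have hpartial : ∀ z : Θ × W, fderiv ℝ (fun w => Ψ (z.1, w)) z.2 =
      (fderiv ℝ Ψ z).comp (ContinuousLinearMap.inr ℝ Θ W) := fun z =>
    ((hΨ.differentiable one_ne_zero z).hasFDerivAt.comp z.2
      (hasFDerivAt_prodMk_right z.1 z.2)).fderiv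
  have hcont : Continuous fun z : Θ × W => fderiv ℝ (fun w => Ψ (z.1, w)) z.2 := by
    simp only [hpartial]
    exact (hΨ.continuous_fderiv one_ne_zero).clm_comp continuous_const
  refine isOpen_iff_eventually.2 fun t ht => hK.eventually_forall_of_forall_eventually
    fun w hw => ?_
  by_cases h0 : Ψ (t, w) = 0
  · filter_upwards [hcont.continuousAt.eventually (isOpen_setOf_surjective.mem_nhds (ht w hw h0))]
      with z hz _ using hz
  · filter_upwards [hΨ.continuous.continuousAt.eventually_ne h0] with z hz h using absurd h hz

variable [FiniteDimensional ℝ W]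

lemma exists_surjective_of_finrank_le (h : Module.finrank ℝ W ≤ Module.finrank ℝ V) :
    ∃ π : V →L[ℝ] W, Function.Surjective π := by
  obtain ⟨i, hi⟩ := (finrank_le_iff_exists_linearMap (R := ℝ) (M := W) (M' := V)).1 h
  obtain ⟨r, hr⟩ := i.exists_leftInverse_of_injective (LinearMap.ker_eq_bot.2 hi)
  exact ⟨LinearMap.toContinuousLinearMap r, fun w => ⟨i w, LinearMap.congr_fun hr w⟩⟩

-- The easy case of Sard's theorem. Precomposing with a linear surjection `V → W` reduces it to
-- the case `W = V`, where critical points are those with vanishing Jacobian determinant.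
lemma dense_regular_values (h : Module.finrank ℝ W ≤ Module.finrank ℝ V) {Φ : W → V}
    (hΦ : Differentiable ℝ Φ) :
    Dense {v | ∀ w, Φ w = v → Function.Surjective (fderiv ℝ Φ w)} := by
  borelize V
  obtain ⟨π, hπ⟩ := exists_surjective_of_finrank_le h
  let critical : Set V := {v | ((fderiv ℝ Φ (π v)).comp π).det = 0}
  have hnull : MeasureTheory.Measure.addHaar ((Φ ∘ π) '' critical) = 0 :=
    MeasureTheory.addHaar_image_eq_zero_of_det_fderivWithin_eq_zero _
      (f' := fun v => (fderiv ℝ Φ (π v)).comp π)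
      (fun v _ => ((hΦ (π v)).hasFDerivAt.comp v π.hasFDerivAt).hasFDerivWithinAt)
      fun _ hv => hv
  refine (MeasureTheory.Measure.dense_of_ae (MeasureTheory.compl_mem_ae_iff.2 hnull)).mono ?_
  rintro v hv w rfl
  obtain ⟨z, rfl⟩ := hπ w
  exact Function.Surjective.of_comp (g := π)
    ((det_ne_zero_iff_surjective _).1 fun h0 => hv ⟨z, h0, rfl⟩)

lemma dense_setOf_forall_regular (h : Module.finrank ℝ W ≤ Module.finrank ℝ V) {Ψ : Θ × W → V}
    (hΨ : ∀ t, Differentiable ℝ fun w => Ψ (t, w)) (s : V →L[ℝ] Θ)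
    (hs : ∀ t τ w, Ψ (t + s τ, w) = Ψ (t, w) + τ) :
    Dense {t | ∀ w, Ψ (t, w) = 0 → Function.Surjective (fderiv ℝ (fun w => Ψ (t, w)) w)} := by
  intro t
  have hcont : Continuous fun τ : V => t + s (-τ) := by fun_prop
  refine closure_mono ?_ (image_closure_subset_closure_image hcont
    ⟨0, dense_regular_values h (hΨ t) 0, by simp⟩)
  rintro _ ⟨τ, hτ, rfl⟩ w hw
  have htranslate : (fun w => Ψ (t + s (-τ), w)) = fun w => Ψ (t, w) + -τ :=
    funext fun w => hs t (-τ) w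
  rw [htranslate, fderiv_add_const]
  rw [hs] at hw
  exact hτ w (add_neg_eq_zero.1 hw)

lemma eventually_residual_forall_regular (h : Module.finrank ℝ W ≤ Module.finrank ℝ V)
    {Ψ : Θ × W → V} (hΨ : ContDiff ℝ 1 Ψ) (s : V →L[ℝ] Θ)
    (hs : ∀ t τ w, Ψ (t + s τ, w) = Ψ (t, w) + τ) :
    ∀ᶠ t in residual Θ, ∀ w, Ψ (t, w) = 0 →
      Function.Surjective (fderiv ℝ (fun w => Ψ (t, w)) w) := by
  have hdense := dense_setOf_forall_regular h
    (fun t => (hΨ.comp (contDiff_prodMk_right t)).differentiable one_ne_zero) s hs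
  have hcompact : ∀ n, ∀ᶠ t in residual Θ, ∀ w ∈ compactCovering W n, Ψ (t, w) = 0 →
      Function.Surjective (fderiv ℝ (fun w => Ψ (t, w)) w) := fun n =>
    residual_of_dense_open (isOpen_setOf_forall_mem_regular hΨ (isCompact_compactCovering W n))
      (hdense.mono fun t (ht : ∀ w, _) w _ => ht w)
  filter_upwards [eventually_countable_forall.2 hcompact] with t ht w
  obtain ⟨n, hn⟩ := exists_mem_compactCovering w
  exact ht n w hn

lemma finite_regular_zeros (h : Module.finrank ℝ W = Module.finrank ℝ V) {Φ : W → V}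
    (hΦ : Differentiable ℝ Φ) {K : Set W} (hK : IsCompact K)
    (hreg : ∀ w ∈ K, Φ w = 0 → Function.Surjective (fderiv ℝ Φ w)) :
    {w ∈ K | Φ w = 0}.Finite := by
  by_contra hinf
  obtain ⟨w, hw, hacc⟩ := Set.Infinite.exists_accPt_of_subset_isCompact hinf
    (hK.inter_right (isClosed_eq hΦ.continuous continuous_const)) Subset.rfl
  have hinj : Function.Injective (fderiv ℝ Φ w) :=
    (LinearMap.injective_iff_surjective_of_finrank_eq_finrank h
      (f := (fderiv ℝ Φ w).toLinearMap)).2 (hreg w hw.1 hw.2)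
  obtain ⟨C, -, hC⟩ := LinearMap.exists_antilipschitzWith (fderiv ℝ Φ w).toLinearMap
    (LinearMap.ker_eq_bot.2 hinj)
  have hne := (hΦ w).hasFDerivAt.eventually_ne (c := 0) ⟨C, hC⟩
  rw [accPt_iff_frequently_nhdsNE] at hacc
  obtain ⟨z, hz, hz'⟩ := (hacc.and_eventually hne).exists
  exact hz' hz.2

end Transversality

section Genericity

variable {N d : ℕ}

/-- The affine parametrization of the affine hull of the face `σ_S` by the barycentric coordinates
at the vertices of `S` other than `v`. -/
def faceChart (S : Finset (Fin (N + 1))) (v : Fin (N + 1)) (u : S.erase v → ℝ) :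
    Fin (N + 1) → ℝ :=
  Pi.single v 1 + ∑ j, u j • (Pi.single j.1 1 - Pi.single v 1)

lemma faceChart_restrict {S : Finset (Fin (N + 1))} {v : Fin (N + 1)} (hv : v ∈ S)
    {x : Fin (N + 1) → ℝ} (hx : x ∈ simpFace S) : faceChart S v (fun j => x j) = x := by
  have hsum := sum_eq_one_of_mem_simpFace hx
  rw [← Finset.add_sum_erase S x hv] at hsum
  calc faceChart S v (fun j => x j)
      = (1 - ∑ i ∈ S.erase v, x i) • Pi.single v 1 + ∑ i ∈ S.erase v, x i • Pi.single i 1 := by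
        simp only [faceChart, smul_sub, Finset.sum_sub_distrib, ← Finset.sum_smul, sub_smul,
          one_smul, Finset.sum_coe_sort (S.erase v) x,
          Finset.sum_coe_sort (S.erase v) fun i => x i • (Pi.single i 1 : Fin (N + 1) → ℝ)]
        abel
    _ = ∑ i ∈ S, x i • Pi.single i 1 := by
        rw [← eq_sub_of_add_eq hsum,
          Finset.add_sum_erase S (fun i => x i • (Pi.single i 1 : Fin (N + 1) → ℝ)) hv]
    _ = ∑ i, x i • Pi.single i 1 :=
        Finset.sum_subset (Finset.subset_univ S) fun i _ hi => by rw [hx.2 i hi, zero_smul]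
    _ = x := (pi_eq_sum_univ' x).symm

lemma contDiff_faceChart (S : Finset (Fin (N + 1))) (v : Fin (N + 1)) :
    ContDiff ℝ 1 (faceChart S v) := by
  unfold faceChart
  fun_prop

lemma sum_faceChart_smul {S : Finset (Fin (N + 1))} {v : Fin (N + 1)} (hv : v ∈ S)
    (u : S.erase v → ℝ) {E : Type*} [AddCommGroup E] [Module ℝ E] {t : Fin (N + 1) → E} {a : E}
    (ht : ∀ i ∈ S, t i = a) : ∑ i, faceChart S v u i • t i = a := by
  have hS : ∀ j : S.erase v, t j = a := fun j => ht j (Finset.mem_of_mem_erase j.2)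
  rw [← Fintype.linearCombination_apply]
  simp [faceChart, Fintype.linearCombination_apply_single, ht v hv, hS]

/-- The perturbation of `g` by the linear map with value `t i` at the `i`-th vertex. -/
def perturb (g : (Fin (N + 1) → ℝ) → Euc d) (t : Fin (N + 1) → Euc d) (x : Fin (N + 1) → ℝ) :
    Euc d :=
  g x + ∑ i, x i • t i

variable {g : (Fin (N + 1) → ℝ) → Euc d} {P : Finset (Finset (Fin (N + 1)))}
  {v : ∀ S : P, S.1} {t : Fin (N + 1) → Euc d}

/-- Parameters for a choice of one point on (the affine hull of) each face in a family, together
with a point of `ℝ^d`. The faces are parametrized by `faceChart` with pivot vertices `v`. -/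
abbrev CoincidenceDomain (d : ℕ) (v : ∀ S : P, S.1) : Type :=
  (∀ S : P, (S.1.erase (v S) → ℝ)) × Euc d

/-- The map whose zeros are the coincidences of the perturbed map on a family of faces. -/
def coincidenceMap (g : (Fin (N + 1) → ℝ) → Euc d) (v : ∀ S : P, S.1)
    (z : (Fin (N + 1) → Euc d) × CoincidenceDomain d v) (S : P) : Euc d :=
  perturb g z.1 (faceChart S.1 (v S) (z.2.1 S)) - z.2.2

lemma contDiff_coincidenceMap (hg : ContDiff ℝ 1 g) (v : ∀ S : P, S.1) :
    ContDiff ℝ 1 (coincidenceMap g v) := by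
  refine contDiff_pi.2 fun S => ?_
  have hx : ContDiff ℝ 1 fun z : (Fin (N + 1) → Euc d) × CoincidenceDomain d v =>
      faceChart S.1 (v S) (z.2.1 S) :=
    (contDiff_faceChart S.1 (v S)).comp (contDiff_pi.1 (contDiff_fst.comp contDiff_snd) S)
  have hxi := contDiff_pi.1 hx
  unfold coincidenceMap perturb
  fun_prop

lemma finrank_coincidenceDomain (d : ℕ) (v : ∀ S : P, S.1) :
    (Module.finrank ℝ (CoincidenceDomain d v) : ℤ) + totalCodim d P =
      Module.finrank ℝ (P → Euc d) + d := by
  have hcard : ∀ S : P, ((S.1.erase (v S)).card : ℤ) = S.1.card - 1 := fun S => by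
    rw [← Finset.card_erase_add_one (v S).2]
    push_cast
    ring
  rw [totalCodim, ← Finset.sum_coe_sort P]
  simp only [Module.finrank_prod, Module.finrank_pi_fintype, Module.finrank_self,
    finrank_euclideanSpace_fin, Finset.sum_const, Finset.card_univ, Fintype.card_coe, smul_eq_mul,
    mul_one, Nat.cast_add, Nat.cast_sum, Nat.cast_mul, hcard, Finset.sum_sub_distrib,
    nsmul_eq_mul]
  ring

/-- The perturbation that is constant on each face of a family of disjoint faces. -/
def facewiseConst (d : ℕ) (P : Finset (Finset (Fin (N + 1)))) :
    (P → Euc d) →L[ℝ] (Fin (N + 1) → Euc d) :=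
  ContinuousLinearMap.pi fun i =>
    ∑ S : P, if i ∈ S.1 then ContinuousLinearMap.proj S else 0

lemma facewiseConst_apply (hP : IsDisjointFamily P) (τ : P → Euc d) (S : P) {i : Fin (N + 1)}
    (hi : i ∈ S.1) : facewiseConst d P τ i = τ S := by
  simp only [facewiseConst, ContinuousLinearMap.pi_apply, sum_apply]
  rw [Finset.sum_eq_single_of_mem S (Finset.mem_univ S) fun T _ hTS => ?_]
  · simp [hi]
  · have hiT : i ∉ T.1 := fun hiT => hTS (Subtype.ext (hP.eq_of_mem T.2 S.2 hiT hi))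
    simp [hiT]

lemma coincidenceMap_add (hP : IsDisjointFamily P) (t : Fin (N + 1) → Euc d) (τ : P → Euc d)
    (w : CoincidenceDomain d v) :
    coincidenceMap g v (t + facewiseConst d P τ, w) = coincidenceMap g v (t, w) + τ := by
  ext1 S
  simp only [coincidenceMap, perturb, Pi.add_apply, smul_add, Finset.sum_add_distrib]
  rw [sum_faceChart_smul (v S).2 _ fun i hi => facewiseConst_apply hP τ S hi]
  abel

/-- The perturbation `t` is regular for the family of faces of `P` if the differential of
`coincidenceMap` is onto at all its zeros. -/
def IsRegularPerturbation (g : (Fin (N + 1) → ℝ) → Euc d) (v : ∀ S : P, S.1)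
    (t : Fin (N + 1) → Euc d) : Prop :=
  ∀ w, coincidenceMap g v (t, w) = 0 →
    Function.Surjective (fderiv ℝ (fun w => coincidenceMap g v (t, w)) w)

lemma eventually_residual_isRegularPerturbation (hg : ContDiff ℝ 1 g) (hP : IsDisjointFamily P)
    (hd : d ≤ totalCodim d P) (v : ∀ S : P, S.1) :
    ∀ᶠ t in residual (Fin (N + 1) → Euc d), IsRegularPerturbation g v t := by
  have hfinrank := finrank_coincidenceDomain d v
  exact eventually_residual_forall_regular (by omega) (contDiff_coincidenceMap hg v)
    (facewiseConst d P) (coincidenceMap_add hP)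

lemma coincidenceMap_eq_zero {x : P → Fin (N + 1) → ℝ} {p : Euc d}
    (hx : ∀ S : P, x S ∈ simpFace S.1) (hxp : ∀ S, perturb g t (x S) = p) :
    coincidenceMap g v (t, fun S j => x S j, p) = 0 := by
  ext1 S
  simp only [coincidenceMap, faceChart_restrict (v S).2 (hx S), hxp S, sub_self, Pi.zero_apply]

lemma IsRegularPerturbation.totalCodim_le (ht : IsRegularPerturbation g v t)
    (hne : (commonPoints (perturb g t) P).Nonempty) : totalCodim d P ≤ d := by
  obtain ⟨p, hp⟩ := hne
  choose! x hx hxp using mem_commonPoints.1 hp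
  have hsurj := ht _ (coincidenceMap_eq_zero (x := fun S => x S.1) (fun S => hx S.1 S.2)
    fun S => hxp S.1 S.2)
  have hrank := LinearMap.finrank_le_finrank_of_surjective
    (f := (fderiv ℝ (fun w => coincidenceMap g v (t, w)) _).toLinearMap) hsurj
  have hfinrank := finrank_coincidenceDomain d v
  omega

/-- The parameters of the points on the faces themselves (rather than their affine hulls) and of
the values of the perturbed map. -/
def coincidenceRegion (g : (Fin (N + 1) → ℝ) → Euc d) (v : ∀ S : P, S.1)
    (t : Fin (N + 1) → Euc d) : Set (CoincidenceDomain d v) :=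
  (univ.pi fun S : P => (fun x (j : S.1.erase (v S)) => x j) '' simpFace S.1) ×ˢ
    (perturb g t '' stdSimp N)

lemma continuous_perturb (hg : Continuous g) (t : Fin (N + 1) → Euc d) :
    Continuous (perturb g t) := by
  unfold perturb
  fun_prop

lemma isCompact_coincidenceRegion (hg : Continuous g) (v : ∀ S : P, S.1)
    (t : Fin (N + 1) → Euc d) : IsCompact (coincidenceRegion g v t) := by
  have hface : ∀ S : P, IsCompact ((fun x (j : S.1.erase (v S)) => x j) '' simpFace S.1) :=
    fun S => (isCompact_simpFace S.1).image (continuous_pi fun j => continuous_apply j.1)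
  exact (isCompact_univ_pi hface).prod ((isCompact_stdSimp N).image (continuous_perturb hg t))

lemma IsRegularPerturbation.finite_coincidences (ht : IsRegularPerturbation g v t)
    (hg : ContDiff ℝ 1 g) (hd : totalCodim d P = d) :
    {y | ∃ S ∈ P, y ∈ simpFace S ∧ perturb g t y ∈ commonPoints (perturb g t) P}.Finite := by
  have hfinrank := finrank_coincidenceDomain d v
  have hfin := finite_regular_zeros (Φ := fun w => coincidenceMap g v (t, w)) (by omega)
    ((contDiff_coincidenceMap hg v).comp (contDiff_prodMk_right t) |>.differentiable one_ne_zero)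
    (isCompact_coincidenceRegion hg.continuous v t) fun w _ => ht w
  refine (finite_iUnion fun S : P => hfin.image fun w => faceChart S.1 (v S) (w.1 S)).subset ?_
  rintro y ⟨S, hS, hy, hyP⟩
  choose! x hx hxy using mem_commonPoints.1 hyP
  -- The witness for `S` is replaced by `y` itself.
  have hx' : ∀ T : P, Function.update x S y T ∈ simpFace T.1 ∧
      perturb g t (Function.update x S y T) = perturb g t y := by
    rintro ⟨T, hT⟩
    obtain rfl | h := eq_or_ne T S
    · simp [hy]
    · simp [h, hx T hT, hxy T hT]
  refine mem_iUnion.2 ⟨⟨S, hS⟩, _, ⟨⟨?_, mem_image_of_mem _ hy.1⟩,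
    coincidenceMap_eq_zero (fun T => (hx' T).1) fun T => (hx' T).2⟩, ?_⟩
  · exact fun T _ => mem_image_of_mem _ (hx' T).1
  · simp only [Function.update_self]
    exact faceChart_restrict (v ⟨S, hS⟩).2 hy

lemma eventually_residual_genPos_perturb (hg : ContDiff ℝ 1 g) :
    ∀ᶠ t in residual (Fin (N + 1) → Euc d), GenPos d (perturb g t) := by
  have hregular : ∀ P : Finset (Finset (Fin (N + 1))),
      ∀ᶠ t in residual (Fin (N + 1) → Euc d), IsDisjointFamily P → d ≤ totalCodim d P →
        ∃ v : ∀ S : P, S.1, IsRegularPerturbation g v t := fun P => by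
    by_cases hP : IsDisjointFamily P ∧ d ≤ totalCodim d P
    · let v : ∀ S : P, S.1 := fun S => ⟨_, (hP.1.nonempty S.1 S.2).choose_spec⟩
      filter_upwards [eventually_residual_isRegularPerturbation hg hP.1 hP.2 v] with t ht _ _
        using ⟨v, ht⟩
    · exact .of_forall fun t h hd => absurd ⟨h, hd⟩ hP
  filter_upwards [eventually_countable_forall.2 hregular] with t ht
  refine ⟨fun P hP hne => ?_, fun P hP hd => ?_⟩
  · by_contra! hlt
    obtain ⟨v, hv⟩ := ht P hP hlt.le
    exact (hv.totalCodim_le hne).not_gt hlt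
  · obtain ⟨v, hv⟩ := ht P hP hd.ge
    exact hv.finite_coincidences hg hd

end Genericity

section DenseGenPos

lemma dense_setOf_contDiff {E F : Type*} [NormedAddCommGroup E] [NormedSpace ℝ E]
    [FiniteDimensional ℝ E] [NormedAddCommGroup F] [NormedSpace ℝ F] :
    Dense {f : C(E, F) | ContDiff ℝ 1 f} := by
  intro f
  have happrox : ∀ n : ℕ, ∃ g : C(E, F), ContDiff ℝ 1 g ∧ ∀ x, dist (g x) (f x) < 1 / (n + 1) :=
    fun n => by
      obtain ⟨g, hg, hgf, -⟩ := f.continuous.exists_contDiff_approx 1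
        (ε := fun _ => 1 / ((n : ℝ) + 1)) continuous_const fun _ => Nat.one_div_pos_of_nat
      exact ⟨⟨g, hg.continuous⟩, hg, hgf⟩
  choose g hg hgf using happrox
  refine mem_closure_of_tendsto (f := g) (b := Filter.atTop) ?_ (.of_forall hg)
  refine ContinuousMap.tendsto_of_tendstoLocallyUniformly
    (TendstoUniformly.tendstoLocallyUniformly <| Metric.tendstoUniformly_iff.2 fun ε hε => ?_)
  filter_upwards [tendsto_one_div_add_atTop_nhds_zero_nat.eventually_lt_const hε] with n hn x
  rw [dist_comm]
  exact (hgf n x).trans hn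

lemma dense_setOf_genPos (N d : ℕ) : Dense {f : C(Fin (N + 1) → ℝ, Euc d) | GenPos d f} := by
  refine dense_closure.1 (dense_setOf_contDiff.mono fun g hg => ?_)
  let Λ : C((Fin (N + 1) → Euc d) × (Fin (N + 1) → ℝ), Euc d) :=
    ⟨fun z => perturb g z.1 z.2, by unfold perturb; fun_prop⟩
  have hzero : Λ.curry 0 = g := by ext1 x; simp [Λ, perturb]
  rw [← hzero]
  have himage : Λ.curry '' {t | GenPos d (perturb g t)} ⊆ {f | GenPos d f} :=
    image_subset_iff.2 fun _ ht => ht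
  exact closure_mono himage
    (image_closure_subset_closure_image Λ.curry.continuous
      (mem_image_of_mem _ (dense_of_mem_residual (eventually_residual_genPos_perturb hg) 0)))

end DenseGenPos

section ClosedConditions

section ContinuousMap

variable {X Y : Type*} [TopologicalSpace X] [LocallyCompactSpace X] [TopologicalSpace Y]
  {K : Set X}

lemma isClosed_setOf_mem_image [T2Space Y] (hK : IsCompact K) :
    IsClosed {z : C(X, Y) × Y | z.2 ∈ z.1 '' K} := by
  have := isCompact_iff_compactSpace.1 hK
  have hclosed : IsClosed {z : (C(X, Y) × Y) × K | z.1.1 z.2 = z.1.2} :=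
    isClosed_eq (by fun_prop) (by fun_prop)
  convert isClosedMap_fst_of_compactSpace _ hclosed using 1
  ext ⟨f, y⟩
  simp

lemma isClosed_setOf_exists_of_mem_image (hK : IsCompact K) {A : Set (C(X, Y) × Y)}
    (hA : IsClosed A) (hAK : ∀ f y, (f, y) ∈ A → y ∈ f '' K) : IsClosed {f | ∃ y, (f, y) ∈ A} := by
  have := isCompact_iff_compactSpace.1 hK
  have hclosed : IsClosed {z : C(X, Y) × K | (z.1, z.1 z.2) ∈ A} := hA.preimage (by fun_prop)
  convert isClosedMap_fst_of_compactSpace _ hclosed using 1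
  ext f
  constructor
  · rintro ⟨y, hy⟩
    obtain ⟨x, hx, rfl⟩ := hAK f y hy
    exact ⟨(f, ⟨x, hx⟩), hy, rfl⟩
  · rintro ⟨⟨f, x⟩, hx, rfl⟩
    exact ⟨f x, hx⟩

end ContinuousMap

variable {N d : ℕ} {S : Finset (Fin (N + 1))}

-- An extension of `f` avoiding `p` deforms, by adding `f' - f`, to an extension of `f'` avoiding
-- `p'` whenever `f'` and `p'` are close to `f` and `p`.
lemma isClosed_setOf_inWne (hS : S.Nonempty) :
    IsClosed {z : C(Fin (N + 1) → ℝ, Euc d) × Euc d | InWne d z.1 S z.2} := by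
  refine isOpen_compl_iff.1 (isOpen_iff_mem_nhds.2 ?_)
  rintro ⟨f, p⟩ (hfp : ¬ InWne d f S p)
  obtain ⟨φ, hφf, hφp⟩ := exists_extension_of_not_inWne hfp
  have hshift : Continuous fun z : C(Fin (N + 1) → ℝ, Euc d) × Euc d => (φ + (z.1 - f), z.2) := by
    fun_prop
  have hopen := (isClosed_setOf_mem_image (isCompact_simpFace S)).isOpen_compl.preimage hshift
  filter_upwards [hopen.mem_nhds fun ⟨x, _, hx⟩ => hφp x (by simpa using hx)]
    with ⟨f', p'⟩ hp' hWne
  refine hp' (hWne.mem_image_simpFace hS (map_continuous (φ + (f' - f))).continuousOn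
    fun x hx => ?_)
  simp [hφf hx]

lemma isClosed_setOf_hitsOrWinds (hS : S.Nonempty) :
    IsClosed {z : C(Fin (N + 1) → ℝ, Euc d) × Euc d | HitsOrWinds d z.1 S z.2} := by
  simp only [HitsOrWinds, ofPred_and, ofPred_forall]
  exact (isClosed_iInter fun _ => isClosed_setOf_mem_image (isCompact_simpFace S)).inter
    (isClosed_iInter fun _ => isClosed_setOf_inWne hS)

variable {a : ℕ}

lemma isClosed_setOf_isTverbergPartition (a : ℕ) (P : Finset (Finset (Fin (N + 1)))) :
    IsClosed {f : C(Fin (N + 1) → ℝ, Euc d) | IsTverbergPartition (a + 1) f P} := by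
  by_cases hP : P.card = a + 1 ∧ IsDisjointFamily P
  swap
  · simp [isTverbergPartition_iff, ← and_assoc, hP]
  obtain ⟨S₀, hS₀⟩ : P.Nonempty := Finset.card_pos.1 (by omega)
  have hclosed : IsClosed {z : C(Fin (N + 1) → ℝ, Euc d) × Euc d |
      ∀ S ∈ P, z.2 ∈ z.1 '' simpFace S} := by
    simp only [ofPred_forall]
    exact isClosed_biInter fun S _ => isClosed_setOf_mem_image (isCompact_simpFace S)
  simp only [isTverbergPartition_iff, hP, true_and, Set.Nonempty, mem_commonPoints]
  exact isClosed_setOf_exists_of_mem_image (isCompact_simpFace S₀) hclosed fun f p hp => hp S₀ hS₀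

-- Some member of `P` has at most `d` elements, so that winding points lie in a compact set.
lemma isClosed_setOf_isWindingPartition (hd : 1 ≤ d) (hN : N ≤ (d + 1) * a)
    (P : Finset (Finset (Fin (N + 1)))) :
    IsClosed {f : C(Fin (N + 1) → ℝ, Euc d) | IsWindingPartition d (a + 1) f P} := by
  by_cases hP : P.card = a + 1 ∧ IsDisjointFamily P ∧ ∀ S ∈ P, S.card ≤ d + 1
  swap
  · simp only [isWindingPartition_iff, ← and_assoc] at hP ⊢
    simp [hP]
  obtain ⟨S₀, hS₀⟩ := smallMembers_nonempty hd (hP.2.1.le_totalCodim hP.1 (by simpa using hN))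
  obtain ⟨hS₀P, hS₀d⟩ := mem_smallMembers.1 hS₀
  have hclosed : IsClosed {z : C(Fin (N + 1) → ℝ, Euc d) × Euc d |
      ∀ S ∈ P, HitsOrWinds d z.1 S z.2} := by
    simp only [ofPred_forall]
    exact isClosed_biInter fun S hS => isClosed_setOf_hitsOrWinds (hP.2.1.nonempty S hS)
  simp only [isWindingPartition_iff, hP.1, hP.2.1, true_and, and_iff_right hP.2.2]
  exact isClosed_setOf_exists_of_mem_image (isCompact_simpFace S₀) hclosed
    fun f p hp => (hp S₀ hS₀P).1 hS₀d

lemma exists_genPos_forall_imp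
    {R : C(Fin (N + 1) → ℝ, Euc d) → Finset (Finset (Fin (N + 1))) → Prop}
    (hR : ∀ P, IsClosed {f | R f P}) (f : C(Fin (N + 1) → ℝ, Euc d)) :
    ∃ g : C(Fin (N + 1) → ℝ, Euc d), GenPos d g ∧ ∀ P, R g P → R f P := by
  have hnear : ∀ᶠ g in 𝓝 f, ∀ P, R g P → R f P := Filter.eventually_all.2 fun P => by
    by_cases hf : R f P
    · exact .of_forall fun _ _ => hf
    · filter_upwards [(hR P).isOpen_compl.mem_nhds hf] with g hg h using absurd h hg
  obtain ⟨g, hg, hgf⟩ := mem_closure_iff_nhds.1 (dense_setOf_genPos N d f) _ hnear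
  exact ⟨g, hgf, hg⟩

end ClosedConditions

section Coincidences

variable {N d : ℕ} {f : (Fin (N + 1) → ℝ) → Euc d} {P : Finset (Finset (Fin (N + 1)))}

/-- The points of the faces in the families of expected codimension `d` whose images lie on all
faces of the family. -/
def coincSet (d : ℕ) (f : (Fin (N + 1) → ℝ) → Euc d) : Set (Fin (N + 1) → ℝ) :=
  {y | ∃ P, IsDisjointFamily P ∧ totalCodim d P = d ∧
    ∃ S ∈ P, y ∈ simpFace S ∧ f y ∈ commonPoints f P}

lemma coincSet_subset_stdSimp : coincSet d f ⊆ stdSimp N :=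
  fun _ ⟨_, _, _, _, _, hy, _⟩ => hy.1

lemma GenPos.finite_coincSet (hf : GenPos d f) : (coincSet d f).Finite := by
  refine ((Set.toFinite {P | IsDisjointFamily P ∧ totalCodim d P = d}).biUnion fun P hP =>
    hf.finite_coincidences P hP.1 hP.2).subset ?_
  rintro y ⟨P, hP, hd, hy⟩
  exact mem_biUnion (show P ∈ {P | _} from ⟨hP, hd⟩) hy

end Coincidences

section Height

variable {N : ℕ} {r : ℝ} {x y : Fin (N + 1) → ℝ}

/-- The linear function with geometrically decreasing values at the vertices. For small `r` the
height of a point is governed by its first nonzero coordinate. -/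
def height (r : ℝ) : (Fin (N + 1) → ℝ) →L[ℝ] ℝ :=
  ∑ v : Fin (N + 1), r ^ (v : ℕ) • ContinuousLinearMap.proj v

lemma height_apply (r : ℝ) (x : Fin (N + 1) → ℝ) :
    height r x = ∑ v : Fin (N + 1), r ^ (v : ℕ) * x v := by
  simp [height]

lemma height_nonneg (hr : 0 ≤ r) (hx : ∀ i, 0 ≤ x i) : 0 ≤ height r x := by
  rw [height_apply]
  exact Finset.sum_nonneg fun i _ => mul_nonneg (pow_nonneg hr _) (hx i)

lemma height_le_one (hr : 0 ≤ r) (hr1 : r ≤ 1) (hx : x ∈ stdSimp N) : height r x ≤ 1 := by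
  rw [height_apply, ← hx.2]
  exact Finset.sum_le_sum fun i _ => mul_le_of_le_one_left (hx.1 i) (pow_le_one₀ hr hr1)

lemma height_lt_height (hr : 0 < r) (hr1 : r ≤ 1) (hx : x ∈ stdSimp N) (hy : ∀ i, 0 ≤ y i)
    {v : Fin (N + 1)} (hyv : r < y v) (hxv : ∀ w ≤ v, x w = 0) : height r x < height r y := by
  calc height r x ≤ ∑ w, r ^ (v + 1 : ℕ) * x w := by
        rw [height_apply]
        refine Finset.sum_le_sum fun w _ => ?_
        obtain h | h := le_or_gt w v
        · simp [hxv w h]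
        · exact mul_le_mul_of_nonneg_right
            (pow_le_pow_of_le_one hr.le hr1 (Nat.succ_le_of_lt h)) (hx.1 w)
    _ = r ^ (v : ℕ) * r := by rw [← Finset.mul_sum, hx.2, mul_one, pow_succ]
    _ < r ^ (v : ℕ) * y v := mul_lt_mul_of_pos_left hyv (pow_pos hr _)
    _ ≤ height r y := by
        rw [height_apply]
        exact Finset.single_le_sum (f := fun w : Fin (N + 1) => r ^ (w : ℕ) * y w)
          (fun i _ => mul_nonneg (pow_nonneg hr.le _) (hy i)) (Finset.mem_univ v)

lemma finite_setOf_height_eq_zero (hx : x ≠ 0) : {r | height r x = 0}.Finite := by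
  let poly : Polynomial ℝ := ∑ v : Fin (N + 1), Polynomial.monomial (v : ℕ) (x v)
  have heval : ∀ r, poly.eval r = height r x := fun r => by
    simp only [poly, Polynomial.eval_finsetSum, Polynomial.eval_monomial, height_apply, mul_comm]
  have hpoly : poly ≠ 0 := fun h => hx <| funext fun v => by
    simpa [poly, Polynomial.finsetSum_coeff, Polynomial.coeff_monomial, Fin.val_inj]
      using congrArg (fun p => Polynomial.coeff p v) h
  simpa only [Polynomial.IsRoot, heval] using Polynomial.finite_setOfPred_isRoot hpoly

lemma eventually_injOn_height {Y : Set (Fin (N + 1) → ℝ)} (hY : Y.Finite) :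
    ∀ᶠ r in 𝓝[>] (0 : ℝ), InjOn (height r) Y := by
  have hpair : ∀ x ∈ Y, ∀ y ∈ Y, ∀ᶠ r in 𝓝[>] (0 : ℝ), height r x = height r y → x = y := by
    intro x _ y _
    obtain rfl | hxy := eq_or_ne x y
    · exact .of_forall fun _ _ => rfl
    have hfin := (finite_setOf_height_eq_zero (sub_ne_zero.2 hxy)).subset
      (sdiff_subset (t := {(0 : ℝ)}))
    filter_upwards [self_mem_nhdsWithin,
      mem_nhdsWithin_of_mem_nhds (hfin.isClosed.compl_mem_nhds fun h => h.2 rfl)] with r hr0 hr h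
    exact absurd ⟨by simp [h], hr0.ne'⟩ hr
  filter_upwards [(Filter.eventually_all_finite hY).2 fun x hx =>
    (Filter.eventually_all_finite hY).2 (hpair x hx)] with r hr x hx y hy using hr x hx y hy

lemma eventually_lt_of_ne_zero {Y : Set (Fin (N + 1) → ℝ)} (hY : Y.Finite)
    (hY' : ∀ y ∈ Y, ∀ v, 0 ≤ y v) : ∀ᶠ r in 𝓝[>] (0 : ℝ), ∀ y ∈ Y, ∀ v, y v ≠ 0 → r < y v := by
  refine (Filter.eventually_all_finite hY).2 fun y hy => Filter.eventually_all.2 fun v => ?_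
  obtain h0 | h0 := eq_or_ne (y v) 0
  · exact .of_forall fun _ h => absurd h0 h
  · filter_upwards [Ioo_mem_nhdsGT ((hY' y hy v).lt_of_ne' h0)] with r hr _ using hr.2

end Height

section Bump

variable {N d : ℕ} {x : Fin (N + 1) → ℝ} {S : Finset (Fin (N + 1))}

/-- A function on nonnegative vectors that vanishes on the `(d-1)`-skeleton and is positive in the
interiors of the `d`-faces. -/
def bump (d : ℕ) (x : Fin (N + 1) → ℝ) : ℝ :=
  min 1 (∑ S : Finset (Fin (N + 1)) with S.card = d + 1, ∏ v ∈ S, x v)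

lemma continuous_bump (N d : ℕ) : Continuous (bump (N := N) d) := by
  unfold bump
  fun_prop

lemma bump_nonneg (hx : ∀ i, 0 ≤ x i) : 0 ≤ bump d x :=
  le_min zero_le_one (Finset.sum_nonneg fun _ _ => Finset.prod_nonneg fun i _ => hx i)

lemma bump_le_one (d : ℕ) (x : Fin (N + 1) → ℝ) : bump d x ≤ 1 := min_le_left _ _

lemma bump_eq_zero (hS : S.card ≤ d) (hx : ∀ i ∉ S, x i = 0) : bump d x = 0 := by
  rw [bump, Finset.sum_eq_zero fun T hT => ?_, min_eq_right zero_le_one]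
  obtain ⟨v, hvT, hvS⟩ := Finset.exists_mem_notMem_of_card_lt_card
    (hS.trans_lt (Nat.lt_of_succ_le (Finset.mem_filter.1 hT).2.ge))
  exact Finset.prod_eq_zero hvT (hx v hvS)

lemma bump_pos (hS : S.card = d + 1) (hx : x ∈ simpFace S) (hx' : x ∉ simpFaceBoundary S) :
    0 < bump d x := by
  have hpos : ∀ v ∈ S, 0 < x v := fun v hv =>
    (hx.1.1 v).lt_of_ne fun h => hx' ⟨hx, v, hv, h.symm⟩
  refine lt_min one_pos ((Finset.prod_pos hpos).trans_le ?_)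
  exact Finset.single_le_sum (f := fun T : Finset (Fin (N + 1)) => ∏ v ∈ T, x v)
    (fun T _ => Finset.prod_nonneg fun i _ => hx.1.1 i) (by simp [hS])

end Bump

section Extensions

variable {N d : ℕ}

lemma exists_avoiding_extension (hd : 1 ≤ d) (f : C(Fin (N + 1) → ℝ, Euc d)) (p : Euc d) :
    ∃ e : C(Fin (N + 1) → ℝ, Euc d), EqOn e f (skel N (d - 1)) ∧
      ∀ S : Finset (Fin (N + 1)), S.card = d + 1 → ∀ x ∈ simpFace S, e x = p → InWne d f S p := by
  have hface : ∀ S : Finset (Fin (N + 1)), ∃ φ : C(Fin (N + 1) → ℝ, Euc d),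
      EqOn φ f (simpFace S ∩ skel N (d - 1)) ∧
        (S.card = d + 1 → ∀ x, φ x = p → InWne d f S p) := fun S => by
    by_cases hS : S.card = d + 1 ∧ ¬ InWne d f S p
    · obtain ⟨φ, hφf, hφp⟩ := exists_extension_of_not_inWne hS.2
      refine ⟨φ, fun x ⟨hxS, hx⟩ => hφf ?_, fun _ x h => absurd h (hφp x)⟩
      obtain ⟨T, hT, hxT⟩ := mem_skel_iff.1 hx
      exact mem_simpFaceBoundary_of_mem_simpFace hxS hxT fun hST => by
        have := Finset.card_le_card hST
        omega
    · exact ⟨f, fun _ _ => rfl, fun h _ _ => not_not.1 (not_and.1 hS h)⟩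
  choose φ hφf hφp using hface
  have hcompat : ∀ S T, S.card ≤ d + 1 → T.card ≤ d + 1 →
      EqOn (φ S) (φ T) (simpFace S ∩ simpFace T) := by
    rintro S T hS hT x ⟨hxS, hxT⟩
    obtain rfl | hST := eq_or_ne S T
    · rfl
    have hcard : (S ∩ T).card ≤ d := by
      by_contra! h
      exact hST <| (Finset.eq_of_subset_of_card_le Finset.inter_subset_left (hS.trans h)).symm.trans
        (Finset.eq_of_subset_of_card_le Finset.inter_subset_right (hT.trans h))
    have hx : x ∈ skel N (d - 1) :=
      simpFace_subset_skel (by omega) (mem_simpFace_inter hxS hxT)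
    exact (hφf S ⟨hxS, hx⟩).trans (hφf T ⟨hxT, hx⟩).symm
  obtain ⟨e, he⟩ := exists_continuousMap_eqOn_of_finite_closed
    (ι := {S : Finset (Fin (N + 1)) // S.card ≤ d + 1}) (fun S => isClosed_simpFace S.1)
    (fun S => (φ S).continuous.continuousOn) fun S T => hcompat S T S.2 T.2
  refine ⟨e, fun x hx => ?_, fun S hS x hx hxp => hφp S hS x ((he ⟨S, hS.le⟩ hx).symm.trans hxp)⟩
  obtain ⟨S, hS, hxS⟩ := mem_skel_iff.1 hx
  exact (he ⟨S, by omega⟩ hxS).trans (hφf S ⟨hxS, hx⟩)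

lemma exists_interpolating_family {X V ι : Type*} [TopologicalSpace X] [AddCommGroup V]
    [Module ℝ V] [TopologicalSpace V] [IsTopologicalAddGroup V] [ContinuousSMul ℝ V]
    (s : Finset ι) {h : ι → ℝ} (hh : InjOn h s) (f : C(X, V)) (e : ι → C(X, V)) :
    ∃ E : C(ℝ × X, V), (∀ i ∈ s, ∀ x, E (h i, x) = e i x) ∧
      ∀ η x, (∀ i ∈ s, e i x = f x) → E (η, x) = f x := by
  classical
  refine ⟨⟨fun z => f z.2 + ∑ i ∈ s, (Lagrange.basis s h i).eval z.1 • (e i z.2 - f z.2), ?_⟩,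
    fun i hi x => ?_, fun η x hx => ?_⟩
  · have (i : ι) : Continuous fun z : ℝ × X => (Lagrange.basis s h i).eval z.1 :=
      (Polynomial.continuous _).comp continuous_fst
    fun_prop
  · have hsum : ∑ j ∈ s, (Lagrange.basis s h j).eval (h i) • (e j x - f x) = e i x - f x := by
      rw [Finset.sum_eq_single_of_mem i hi fun j _ hji => by
        rw [Lagrange.eval_basis_of_ne hji hi, zero_smul],
        Lagrange.eval_basis_self hh hi, one_smul]
    simp only [ContinuousMap.coe_mk, hsum, add_sub_cancel]
  · simp only [ContinuousMap.coe_mk, add_eq_left]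
    exact Finset.sum_eq_zero fun i hi => by rw [hx i hi, sub_self, smul_zero]

lemma eventually_one_lt_mul_of_isCompact {X : Type*} [TopologicalSpace X] {K : Set X}
    (hK : IsCompact K) {g : X → ℝ} (hg : ContinuousOn g K) (hpos : ∀ x ∈ K, 0 < g x) :
    ∀ᶠ M in Filter.atTop, ∀ x ∈ K, 1 < M * g x := by
  obtain ⟨C, hC⟩ := hK.bddAbove_image (hg.inv₀ fun x hx => (hpos x hx).ne')
  filter_upwards [Filter.eventually_gt_atTop C] with M hM x hx
  exact (inv_lt_iff_one_lt_mul₀ (hpos x hx)).1 ((hC (mem_image_of_mem _ hx)).trans_lt hM)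

lemma eventually_one_lt_mul_bump (hd : 1 ≤ d) {f : (Fin (N + 1) → ℝ) → Euc d}
    {E : C(ℝ × (Fin (N + 1) → ℝ), Euc d)} (hE : ∀ η, ∀ x ∈ skel N (d - 1), E (η, x) = f x)
    {S : Finset (Fin (N + 1))} (hS : S.card = d + 1) {p : Euc d}
    (hp : p ∉ f '' simpFaceBoundary S) :
    ∀ᶠ M in Filter.atTop, ∀ η ∈ Icc (0 : ℝ) 1, ∀ x ∈ simpFace S, E (η, x) = p →
      1 < M * bump d x := by
  have hK : IsCompact ((Icc 0 1 ×ˢ simpFace S) ∩ E ⁻¹' {p}) :=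
    (isCompact_Icc.prod (isCompact_simpFace S)).inter_right
      (isClosed_singleton.preimage E.continuous)
  have hbump : Continuous fun z : ℝ × (Fin (N + 1) → ℝ) => bump d z.2 :=
    (continuous_bump N d).comp continuous_snd
  filter_upwards [eventually_one_lt_mul_of_isCompact hK hbump.continuousOn
    fun z ⟨⟨_, hz⟩, hzp⟩ => bump_pos hS hz fun hzb => hp ⟨z.2, hzb,
      (hE z.1 z.2 (simpFaceBoundary_subset_skel (by omega) hzb)).symm.trans hzp⟩]
    with M hM η hη x hx hxp using hM (η, x) ⟨⟨hη, hx⟩, hxp⟩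

end Extensions

section LiftData

variable {N d : ℕ}

/-- The parameters of the lift of `f` to `ℝ^{d+1}`: the ratio of the heights of consecutive
vertices, the depth to which the interiors of the `d`-faces are pushed down, and the family
`x ↦ family (η, x)` of modifications of `f` used at height `η`. At the height of a coincidence `y`
only `d`-faces around which `f` winds meet `f y`, and at any height a `d`-face meeting `f y` does so
where it has been pushed down by more than `1`. -/
structure LiftData (d : ℕ) (f : (Fin (N + 1) → ℝ) → Euc d) where
  ratio : ℝ
  depth : ℝ
  family : C(ℝ × (Fin (N + 1) → ℝ), Euc d)
  ratio_pos : 0 < ratio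
  ratio_le_one : ratio ≤ 1
  depth_nonneg : 0 ≤ depth
  family_eqOn_skel : ∀ η, ∀ x ∈ skel N (d - 1), family (η, x) = f x
  ratio_lt : ∀ y ∈ coincSet d f, ∀ v, y v ≠ 0 → ratio < y v
  one_lt_depth_mul_bump : ∀ y ∈ coincSet d f, ∀ S, S.card = d + 1 →
    f y ∉ f '' simpFaceBoundary S → ∀ η ∈ Icc (0 : ℝ) 1, ∀ x ∈ simpFace S,
      family (η, x) = f y → 1 < depth * bump d x
  inWne : ∀ y ∈ coincSet d f, ∀ S, S.card = d + 1 → ∀ x ∈ simpFace S,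
    family (height ratio y, x) = f y → InWne d f S (f y)

lemma GenPos.nonempty_liftData {f : C(Fin (N + 1) → ℝ, Euc d)} (hf : GenPos d f) (hd : 1 ≤ d) :
    Nonempty (LiftData d f) := by
  have hY := hf.finite_coincSet
  obtain ⟨r, ⟨hinj, hlt⟩, hr0, hr1⟩ := ((eventually_injOn_height hY).and
    (eventually_lt_of_ne_zero hY fun y hy => (coincSet_subset_stdSimp hy).1)).and
      (Ioc_mem_nhdsGT zero_lt_one) |>.exists
  choose e hef hewind using fun y : Fin (N + 1) → ℝ => exists_avoiding_extension hd f (f y)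
  obtain ⟨E, hEe, hEf⟩ := exists_interpolating_family hY.toFinset (by simpa using hinj) f e
  have hE : ∀ η, ∀ x ∈ skel N (d - 1), E (η, x) = f x :=
    fun η x hx => hEf η x fun y _ => hef y hx
  have hM : ∀ᶠ M in Filter.atTop, ∀ y ∈ coincSet d f, ∀ S, S.card = d + 1 →
      f y ∉ f '' simpFaceBoundary S → ∀ η ∈ Icc (0 : ℝ) 1, ∀ x ∈ simpFace S,
        E (η, x) = f y → 1 < M * bump d x :=
    (Filter.eventually_all_finite hY).2 fun y _ => Filter.eventually_all.2 fun S =>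
      Filter.eventually_imp_distrib_left.2 fun hS => Filter.eventually_imp_distrib_left.2 fun hyS =>
        eventually_one_lt_mul_bump hd hE hS hyS
  obtain ⟨M, hM, hM0⟩ := (hM.and (Filter.eventually_ge_atTop 0)).exists
  exact ⟨⟨r, M, E, hr0, hr1, hM0, hE, hlt, hM, fun y hy S hS x hx hxy =>
    hewind y S hS x hx ((hEe y (hY.mem_toFinset.2 hy) x).symm.trans hxy)⟩⟩

namespace LiftData

variable {f : (Fin (N + 1) → ℝ) → Euc d} (L : LiftData d f)

/-- The last coordinate of the lifted map on the base simplex, extended to all vectors. -/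
def baseHeight (x : Fin (N + 1) → ℝ) : ℝ := height L.ratio x - L.depth * bump d x

/-- The last coordinate of the lifted map at the additional vertices. It is so large that points
of height at most `1` have at least half of their weight in the base. -/
def apexHeight : ℝ := 2 * L.depth + 4

variable {x y : Fin (N + 1) → ℝ} {s : ℝ}

lemma continuous_baseHeight : Continuous L.baseHeight :=
  (height L.ratio).continuous.sub ((continuous_bump N d).const_mul L.depth)

lemma baseHeight_le_height (hx : ∀ i, 0 ≤ x i) : L.baseHeight x ≤ height L.ratio x :=
  sub_le_self _ (mul_nonneg L.depth_nonneg (bump_nonneg hx))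

lemma height_le_one_of_mem_stdSimp (hx : x ∈ stdSimp N) : height L.ratio x ≤ 1 :=
  height_le_one L.ratio_pos.le L.ratio_le_one hx

lemma one_lt_apexHeight : 1 < L.apexHeight := by
  have := L.depth_nonneg
  rw [apexHeight]
  linarith

lemma weight_le_half (hx : ∀ i, 0 ≤ x i) (h : L.baseHeight x + L.apexHeight * s ≤ 1) :
    s ≤ 1 / 2 := by
  have hheight := height_nonneg L.ratio_pos.le hx
  have hbump := mul_le_of_le_one_right L.depth_nonneg (bump_le_one d x)
  have hdepth := L.depth_nonneg
  rw [baseHeight, apexHeight] at h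
  by_contra! hs
  nlinarith

lemma baseHeight_smul_add {S : Finset (Fin (N + 1))} (hS : S.card ≤ d) (hy : ∀ i ∉ S, y i = 0)
    (s : ℝ) : L.baseHeight ((1 - s) • y) + L.apexHeight * s =
      height L.ratio y + s * (L.apexHeight - height L.ratio y) := by
  rw [baseHeight, bump_eq_zero hS fun i hi => by simp [hy i hi], map_smul, smul_eq_mul]
  ring

end LiftData

end LiftData

section LeadingSet

variable {α : Type*} [LinearOrder α] {P : Finset (Finset α)} {S T : Finset α}

/-- The member of a disjoint family that contains the smallest element of the union. -/
def IsLeadingSet (P : Finset (Finset α)) (S : Finset α) : Prop :=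
  S ∈ P ∧ ∃ v ∈ S, ∀ T ∈ P, T ≠ S → ∀ w ∈ T, v < w

lemma IsLeadingSet.eq (hS : IsLeadingSet P S) (hT : IsLeadingSet P T) : S = T := by
  obtain ⟨hS, v, hv, hvmin⟩ := hS
  obtain ⟨hT, w, hw, hwmin⟩ := hT
  by_contra h
  exact lt_asymm (hvmin T hT (Ne.symm h) w hw) (hwmin S hS h v hv)

lemma IsDisjointFamily.exists_isLeadingSet (hP : IsDisjointFamily P) (hne : P.Nonempty) :
    ∃ S, IsLeadingSet P S := by
  have hU : (P.biUnion id).Nonempty := hne.biUnion hP.nonempty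
  obtain ⟨S, hS, hvS⟩ := Finset.mem_biUnion.1 ((P.biUnion id).min'_mem hU)
  refine ⟨S, hS, _, hvS, fun T hT hTS w hw => ?_⟩
  refine (Finset.min'_le _ w (Finset.mem_biUnion.2 ⟨T, hT, hw⟩)).lt_of_ne fun h => ?_
  exact hTS (hP.eq_of_mem hT hS hw (h ▸ hvS))

end LeadingSet

lemma GenPos.notMem_image_simpFaceBoundary {N d : ℕ} {f : (Fin (N + 1) → ℝ) → Euc d}
    {P : Finset (Finset (Fin (N + 1)))} {p : Euc d} (hf : GenPos d f) (hP : IsDisjointFamily P)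
    (hd : d ≤ totalCodim d P) (hp : p ∈ commonPoints f (smallMembers d P))
    {S : Finset (Fin (N + 1))} (hS : S ∈ P) (hSd : S.card = d + 1) :
    p ∉ f '' simpFaceBoundary S := by
  rintro ⟨x, ⟨hx, v, hv, hxv⟩, rfl⟩
  have hSnot : S ∉ smallMembers d P := fun h => by
    have := (mem_smallMembers.1 h).2
    omega
  have hsub : insert S (smallMembers d P) ⊆ P :=
    Finset.insert_subset hS (Finset.filter_subset _ _)
  have hcodim : d ≤ totalCodim d (insert S (smallMembers d P)) := by
    rw [totalCodim_insert hSnot, hf.totalCodim_smallMembers hP hd hp, hSd]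
    simp
  have hpos := hf.pos_of_mem_commonPoints_erase (hP.subset hsub) hcodim
    (Finset.mem_insert_self _ _) hx (by rwa [Finset.erase_insert hSnot]) hv
  exact hpos.ne' hxv

namespace LiftData

variable {N d : ℕ} {f : (Fin (N + 1) → ℝ) → Euc d} {L : LiftData d f}
  {P : Finset (Finset (Fin (N + 1)))}

/-- A coincidence of the lifted map seen from the base: the members of `P` are the base parts of
the faces involved, `base S` is the normalized base part of the point in the face over `S`, and
`weight S` is its total weight at the additional vertices. -/
structure Coincidence (L : LiftData d f) (P : Finset (Finset (Fin (N + 1)))) where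
  point : Euc d
  level : ℝ
  weight : Finset (Fin (N + 1)) → ℝ
  base : Finset (Fin (N + 1)) → Fin (N + 1) → ℝ
  level_le_one : level ≤ 1
  weight_nonneg : ∀ S ∈ P, 0 ≤ weight S
  base_mem : ∀ S ∈ P, base S ∈ simpFace S
  family_eq : ∀ S ∈ P, L.family (level, base S) = point
  height_eq : ∀ S ∈ P,
    L.baseHeight ((1 - weight S) • base S) + L.apexHeight * weight S = level
  exists_weight_eq_zero : ∃ S ∈ P, weight S = 0

namespace Coincidence

variable (c : L.Coincidence P) {S : Finset (Fin (N + 1))}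

lemma apply_base (hS : S ∈ smallMembers d P) : f (c.base S) = c.point := by
  obtain ⟨hSP, hSd⟩ := mem_smallMembers.1 hS
  rw [← c.family_eq S hSP,
    L.family_eqOn_skel c.level _ (simpFace_subset_skel (by omega) (c.base_mem S hSP))]

lemma point_mem_commonPoints : c.point ∈ commonPoints f (smallMembers d P) :=
  mem_commonPoints.2 fun S hS => ⟨_, c.base_mem S (mem_smallMembers.1 hS).1, c.apply_base hS⟩

lemma height_eq_add_weight_mul (hS : S ∈ smallMembers d P) : c.level =
    height L.ratio (c.base S) + c.weight S * (L.apexHeight - height L.ratio (c.base S)) := by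
  obtain ⟨hSP, hSd⟩ := mem_smallMembers.1 hS
  rw [← c.height_eq S hSP, L.baseHeight_smul_add hSd (c.base_mem S hSP).2]

lemma height_le (hS : S ∈ smallMembers d P) : height L.ratio (c.base S) ≤ c.level := by
  have hSP := (mem_smallMembers.1 hS).1
  rw [c.height_eq_add_weight_mul hS]
  exact le_add_of_nonneg_right <| mul_nonneg (c.weight_nonneg S hSP) <| sub_nonneg.2 <|
    (L.height_le_one_of_mem_stdSimp (c.base_mem S hSP).1).trans L.one_lt_apexHeight.le

lemma height_eq_of_weight_eq_zero (hS : S ∈ smallMembers d P) (h0 : c.weight S = 0) :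
    height L.ratio (c.base S) = c.level := by
  rw [c.height_eq_add_weight_mul hS, h0, zero_mul, add_zero]

variable (hf : GenPos d f) (hd : 1 ≤ d) (hP : IsDisjointFamily P) (hdP : d ≤ totalCodim d P)
include c hf hP hdP

lemma base_mem_coincSet (hS : S ∈ smallMembers d P) : c.base S ∈ coincSet d f :=
  ⟨_, hP.smallMembers, hf.totalCodim_smallMembers hP hdP c.point_mem_commonPoints, S, hS,
    c.base_mem S (mem_smallMembers.1 hS).1, by
      rw [c.apply_base hS]; exact c.point_mem_commonPoints⟩

lemma base_pos (hS : S ∈ smallMembers d P) {v : Fin (N + 1)} (hv : v ∈ S) : 0 < c.base S v := by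
  refine hf.pos_of_mem_commonPoints_erase hP.smallMembers
    (hf.totalCodim_smallMembers hP hdP c.point_mem_commonPoints).ge hS
    (c.base_mem S (mem_smallMembers.1 hS).1) ?_ hv
  rw [c.apply_base hS]
  exact biInter_subset_biInter_left (Finset.erase_subset _ _) c.point_mem_commonPoints

include hd

-- The interiors of the `d`-faces lie too deep to be reached without weight.
lemma mem_smallMembers_of_weight_eq_zero (hS : S ∈ P) (h0 : c.weight S = 0) :
    S ∈ smallMembers d P := by
  obtain ⟨T, hT⟩ := smallMembers_nonempty hd hdP
  have hTP := (mem_smallMembers.1 hT).1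
  refine mem_smallMembers.2 ⟨hS, ?_⟩
  by_contra hSd
  have hScard : S.card = d + 1 :=
    (hf.card_le hP hdP c.point_mem_commonPoints hS).antisymm (Nat.lt_of_not_le hSd)
  have hnot := hf.notMem_image_simpFaceBoundary hP hdP c.point_mem_commonPoints hS hScard
  have hlevel : 0 ≤ c.level :=
    (height_nonneg L.ratio_pos.le (c.base_mem T hTP).1.1).trans (c.height_le hT)
  rw [← c.apply_base hT] at hnot
  have hdeep := L.one_lt_depth_mul_bump _ (c.base_mem_coincSet hf hP hdP hT) S hScard hnot c.level
    ⟨hlevel, c.level_le_one⟩ _ (c.base_mem S hS) ((c.family_eq S hS).trans (c.apply_base hT).symm)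
  have hheight := c.height_eq S hS
  rw [h0, sub_zero, one_smul, mul_zero, add_zero, baseHeight] at hheight
  have := L.height_le_one_of_mem_stdSimp (c.base_mem S hS).1
  linarith

-- Adding weight raises the height, so a member without weight has maximal base height.
lemma isLeadingSet (hS : S ∈ P) (h0 : c.weight S = 0) : IsLeadingSet (smallMembers d P) S := by
  have hSsmall := c.mem_smallMembers_of_weight_eq_zero hf hd hP hdP hS h0
  obtain ⟨T, hT⟩ := hP.smallMembers.exists_isLeadingSet ⟨S, hSsmall⟩
  obtain rfl | hST := eq_or_ne S T
  · exact hT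
  obtain ⟨hTsmall, v, hv, hvmin⟩ := hT
  have hlt : height L.ratio (c.base S) < height L.ratio (c.base T) := by
    refine height_lt_height L.ratio_pos L.ratio_le_one (c.base_mem S hS).1
      (c.base_mem T (mem_smallMembers.1 hTsmall).1).1.1
      (L.ratio_lt _ (c.base_mem_coincSet hf hP hdP hTsmall) v
        (c.base_pos hf hP hdP hTsmall hv).ne')
      fun w hwv => (c.base_mem S hS).2 w fun hw => (hvmin S hSsmall hST w hw).not_ge hwv
  rw [c.height_eq_of_weight_eq_zero hSsmall h0] at hlt
  exact absurd (c.height_le hTsmall) hlt.not_ge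

lemma isWindingPartition : IsWindingPartition d P.card f P := by
  obtain ⟨T, hTP, hT0⟩ := c.exists_weight_eq_zero
  have hT := c.mem_smallMembers_of_weight_eq_zero hf hd hP hdP hTP hT0
  refine isWindingPartition_iff.2 ⟨rfl, hP, fun S hS =>
    hf.card_le hP hdP c.point_mem_commonPoints hS, c.point, fun S hS => ⟨fun hSd =>
      mem_commonPoints.1 c.point_mem_commonPoints S (mem_smallMembers.2 ⟨hS, hSd⟩), fun hSd => ?_⟩⟩
  rw [← c.apply_base hT]
  refine L.inWne _ (c.base_mem_coincSet hf hP hdP hT) S hSd _ (c.base_mem S hS) ?_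
  rw [c.height_eq_of_weight_eq_zero hT hT0, c.family_eq S hS, c.apply_base hT]

end Coincidence

end LiftData

section Parts

variable {α β ι : Type*} (e : α ⊕ ι ≃ β)

/-- The base vertices in a set of vertices of the larger simplex, whose vertices `e` splits into
base vertices and additional ones. -/
def basePart (T : Finset β) : Finset α := (T.map e.symm.toEmbedding).toLeft

/-- The additional vertices in a set of vertices of the larger simplex. -/
def apexPart (T : Finset β) : Finset ι := (T.map e.symm.toEmbedding).toRight

/-- The set of vertices with given base part and apex part. -/
def glueParts (S : Finset α) (A : Finset ι) : Finset β := (S.disjSum A).map e.toEmbedding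

variable {e} {Q : Finset (Finset β)} {T U : Finset β}

lemma mem_basePart {v : α} : v ∈ basePart e T ↔ e (Sum.inl v) ∈ T := by
  simp [basePart, Finset.mem_map_equiv]

lemma mem_apexPart {i : ι} : i ∈ apexPart e T ↔ e (Sum.inr i) ∈ T := by
  simp [apexPart, Finset.mem_map_equiv]

lemma glueParts_basePart_apexPart (T : Finset β) :
    glueParts e (basePart e T) (apexPart e T) = T := by
  rw [glueParts, basePart, apexPart, Finset.toLeft_disjSum_toRight, Finset.map_map]
  simp

lemma IsDisjointFamily.eq_of_mem_basePart (hQ : IsDisjointFamily Q) (hT : T ∈ Q) (hU : U ∈ Q)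
    {v : α} (hvT : v ∈ basePart e T) (hvU : v ∈ basePart e U) : T = U :=
  hQ.eq_of_mem hT hU (mem_basePart.1 hvT) (mem_basePart.1 hvU)

lemma IsDisjointFamily.eq_of_mem_apexPart (hQ : IsDisjointFamily Q) (hT : T ∈ Q) (hU : U ∈ Q)
    {i : ι} (hiT : i ∈ apexPart e T) (hiU : i ∈ apexPart e U) : T = U :=
  hQ.eq_of_mem hT hU (mem_apexPart.1 hiT) (mem_apexPart.1 hiU)

lemma IsDisjointFamily.injOn_basePart (hQ : IsDisjointFamily Q)
    (hne : ∀ T ∈ Q, (basePart e T).Nonempty) : InjOn (basePart e) Q := fun T hT U hU h => by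
  obtain ⟨v, hv⟩ := hne T hT
  exact hQ.eq_of_mem_basePart hT hU hv (h ▸ hv)

lemma IsDisjointFamily.image_basePart [DecidableEq α] (hQ : IsDisjointFamily Q)
    (hne : ∀ T ∈ Q, (basePart e T).Nonempty) : IsDisjointFamily (Q.image (basePart e)) := by
  refine ⟨Finset.forall_mem_image.2 hne, Finset.forall_mem_image.2 fun T hT =>
    Finset.forall_mem_image.2 fun U hU hTU => Finset.disjoint_left.2 fun v hvT hvU => ?_⟩
  exact hTU (congrArg _ (hQ.eq_of_mem_basePart hT hU hvT hvU))

variable [Fintype ι]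

lemma IsDisjointFamily.exists_apexPart_eq_empty (hQ : IsDisjointFamily Q)
    (hcard : Fintype.card ι < Q.card) : ∃ T ∈ Q, apexPart e T = ∅ := by
  by_contra! hne
  choose i hi using hne
  have hinj : Function.Injective fun T : Q => i T T.2 := fun T U h =>
    Subtype.ext (hQ.eq_of_mem_apexPart T.2 U.2 (hi T T.2)
      ((show i T T.2 = i U U.2 from h) ▸ hi U U.2))
  exact hcard.not_ge (Fintype.card_coe Q ▸ Fintype.card_le_of_injective _ hinj)

lemma exists_equiv_forall_eq_singleton {κ : Type*} [Fintype κ]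
    (hcard : Fintype.card κ = Fintype.card ι) {A : κ → Finset ι} (hA : ∀ k, (A k).Nonempty)
    (hdisj : ∀ k l i, i ∈ A k → i ∈ A l → k = l) : ∃ σ : κ ≃ ι, ∀ k, A k = {σ k} := by
  choose σ hσ using hA
  have hinj : Function.Injective σ := fun k l h => hdisj k l _ (hσ k) (h ▸ hσ l)
  let τ := Equiv.ofBijective σ ((Fintype.bijective_iff_injective_and_card σ).2 ⟨hinj, hcard⟩)
  refine ⟨τ, fun k => Finset.eq_singleton_iff_unique_mem.2 ⟨hσ k, fun i hi => ?_⟩⟩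
  obtain ⟨l, rfl⟩ := τ.surjective i
  exact congrArg τ (hdisj l k _ (hσ l) hi)

/-- A disjoint family with base parts `P` in which exactly the member over `S₀` has no additional
vertices. -/
structure LiesOver [DecidableEq α] (e : α ⊕ ι ≃ β) (P : Finset (Finset α)) (S₀ : Finset α)
    (Q : Finset (Finset β)) : Prop where
  isDisjointFamily : IsDisjointFamily Q
  image_basePart : Q.image (basePart e) = P
  apexPart_eq_empty_iff : ∀ T ∈ Q, apexPart e T = ∅ ↔ basePart e T = S₀

variable [DecidableEq α] {P : Finset (Finset α)} {S₀ : Finset α}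

-- There are as many members over `P.erase S₀` as additional vertices, so each gets exactly one.
lemma LiesOver.exists_equiv (hQ : LiesOver e P S₀ Q) (hP : IsDisjointFamily P) (hS₀ : S₀ ∈ P)
    (hcard : P.card = Fintype.card ι + 1) : ∃ σ : P.erase S₀ ≃ ι, ∀ T,
      T ∈ Q ↔ T = glueParts e S₀ ∅ ∨ ∃ S : P.erase S₀, T = glueParts e S {σ S} := by
  obtain ⟨hdisj, rfl, hiff⟩ := hQ
  have hinj : InjOn (basePart e) Q :=
    hdisj.injOn_basePart fun T hT => hP.nonempty _ (Finset.mem_image_of_mem _ hT)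
  have hlift : ∀ S : (Q.image (basePart e)).erase S₀, ∃ T ∈ Q, basePart e T = S :=
    fun S => Finset.mem_image.1 (Finset.mem_of_mem_erase S.2)
  choose t htQ ht using hlift
  obtain ⟨σ, hσ⟩ := exists_equiv_forall_eq_singleton (A := fun S => apexPart e (t S))
    (by rw [Fintype.card_coe, Finset.card_erase_of_mem hS₀, hcard, Nat.add_sub_cancel])
    (fun S => Finset.nonempty_iff_ne_empty.2 fun h => Finset.ne_of_mem_erase S.2
      ((ht S).symm.trans ((hiff _ (htQ S)).1 h)))
    (fun S S' i hi hi' => Subtype.ext <| by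
      rw [← ht S, ← ht S', hdisj.eq_of_mem_apexPart (htQ S) (htQ S') hi hi'])
  have htσ : ∀ S, t S = glueParts e S {σ S} := fun S => by
    rw [← hσ S, ← ht S, glueParts_basePart_apexPart]
  have hbase : ∀ T ∈ Q, basePart e T = S₀ → T = glueParts e S₀ ∅ := fun T hT h => by
    rw [← (hiff T hT).2 h, ← h, glueParts_basePart_apexPart]
  refine ⟨σ, fun T => ⟨fun hT => ?_, ?_⟩⟩
  · refine (eq_or_ne (basePart e T) S₀).imp (hbase T hT) fun h => ?_
    let S : (Q.image (basePart e)).erase S₀ :=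
      ⟨basePart e T, Finset.mem_erase.2 ⟨h, Finset.mem_image_of_mem _ hT⟩⟩
    exact ⟨S, (hinj hT (htQ S) (ht S).symm).trans (htσ S)⟩
  · rintro (rfl | ⟨S, rfl⟩)
    · obtain ⟨T, hT, hTS₀⟩ := Finset.mem_image.1 hS₀
      exact hbase T hT hTS₀ ▸ hT
    · exact htσ S ▸ htQ S

lemma card_le_factorial_of_liesOver (hP : IsDisjointFamily P) (hS₀ : S₀ ∈ P)
    (hcard : P.card = Fintype.card ι + 1) {s : Finset (Finset (Finset β))}
    (hs : ∀ Q ∈ s, LiesOver e P S₀ Q) : s.card ≤ (Fintype.card ι).factorial := by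
  classical
  have hcard' : Fintype.card (P.erase S₀) = Fintype.card ι := by
    rw [Fintype.card_coe, Finset.card_erase_of_mem hS₀, hcard, Nat.add_sub_cancel]
  let σ₀ : P.erase S₀ ≃ ι := Fintype.equivOfCardEq hcard'
  have : Nonempty (P.erase S₀ ≃ ι) := ⟨σ₀⟩
  choose! σ hσ using fun Q hQ => (hs Q hQ).exists_equiv hP hS₀ hcard
  calc s.card ≤ (Finset.univ : Finset (P.erase S₀ ≃ ι)).card :=
        Finset.card_le_card_of_injOn σ (fun Q _ => Finset.mem_univ _) fun Q hQ Q' hQ' h =>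
          Finset.ext fun T => by rw [hσ Q hQ, hσ Q' hQ', h]
    _ = (Fintype.card ι).factorial := by
        rw [Finset.card_univ, Fintype.card_equiv σ₀, hcard']

end Parts

section LiftMap

variable {N N' d : ℕ} {ι : Type*} [Fintype ι]

/-- The point of `ℝ^{d+1}` with first coordinate `η` and remaining coordinates `p`. -/
def consEuc (η : ℝ) (p : Euc d) : Euc (d + 1) := WithLp.toLp 2 (Fin.cons η p.ofLp)

lemma continuous_consEuc : Continuous fun z : ℝ × Euc d => consEuc z.1 z.2 :=
  (PiLp.continuous_toLp 2 _).comp <|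
    continuous_fst.finCons (A := fun _ => ℝ) ((PiLp.continuous_ofLp 2 _).comp continuous_snd)

lemma consEuc_inj {η η' : ℝ} {p p' : Euc d} : consEuc η p = consEuc η' p' ↔ η = η' ∧ p = p' := by
  rw [consEuc, consEuc, (WithLp.toLp_injective 2).eq_iff, Fin.cons_inj,
    (WithLp.ofLp_injective 2).eq_iff (a := p)]

/-- The coordinates of a point at the base vertices. -/
def baseCoords (e : Fin (N + 1) ⊕ ι ≃ Fin (N' + 1)) (x : Fin (N' + 1) → ℝ) : Fin (N + 1) → ℝ :=
  fun v => x (e (Sum.inl v))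

/-- The total weight of a point at the additional vertices. -/
def apexWeight (e : Fin (N + 1) ⊕ ι ≃ Fin (N' + 1)) (x : Fin (N' + 1) → ℝ) : ℝ :=
  ∑ i, x (e (Sum.inr i))

variable {e : Fin (N + 1) ⊕ ι ≃ Fin (N' + 1)} {x : Fin (N' + 1) → ℝ} {T : Finset (Fin (N' + 1))}

lemma sum_baseCoords (hx : x ∈ stdSimp N') : ∑ v, baseCoords e x v = 1 - apexWeight e x := by
  rw [← hx.2, ← Equiv.sum_comp e, Fintype.sum_sum_type]
  exact (add_sub_cancel_right _ _).symm

lemma apexWeight_nonneg (hx : x ∈ stdSimp N') : 0 ≤ apexWeight e x :=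
  Finset.sum_nonneg fun _ _ => hx.1 _

lemma apexWeight_eq_zero (hx : x ∈ simpFace T) (hT : apexPart e T = ∅) : apexWeight e x = 0 :=
  Finset.sum_eq_zero fun i _ => hx.2 _ fun h =>
    Finset.notMem_empty i (hT ▸ mem_apexPart.2 h)

lemma inv_smul_baseCoords_mem_simpFace (hx : x ∈ simpFace T) (h : apexWeight e x < 1) :
    (1 - apexWeight e x)⁻¹ • baseCoords e x ∈ simpFace (basePart e T) := by
  refine ⟨⟨fun v => mul_nonneg (inv_nonneg.2 (sub_pos.2 h).le) (hx.1.1 _), ?_⟩, fun v hv => ?_⟩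
  · simp only [Pi.smul_apply, smul_eq_mul]
    rw [← Finset.mul_sum, sum_baseCoords hx.1, inv_mul_cancel₀ (sub_pos.2 h).ne']
  · rw [Pi.smul_apply, baseCoords, hx.2 _ fun h => hv (mem_basePart.2 h), smul_zero]

namespace LiftData

variable {f : (Fin (N + 1) → ℝ) → Euc d} (L : LiftData d f)

/-- The first coordinate of the lifted map. -/
def liftHeight (e : Fin (N + 1) ⊕ ι ≃ Fin (N' + 1)) (x : Fin (N' + 1) → ℝ) : ℝ :=
  L.baseHeight (baseCoords e x) + L.apexHeight * apexWeight e x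

/-- The lift of `f` to the larger simplex with vertices split by `e`. The base coordinates are
normalized by their sum `1 - apexWeight e x`; taking the maximum with `1 / 2` makes this continuous
and does not affect points of height at most `1`. -/
def liftMap (e : Fin (N + 1) ⊕ ι ≃ Fin (N' + 1)) (x : Fin (N' + 1) → ℝ) : Euc (d + 1) :=
  consEuc (L.liftHeight e x)
    (L.family (L.liftHeight e x, (max (1 - apexWeight e x) (1 / 2))⁻¹ • baseCoords e x))

lemma continuous_liftMap (e : Fin (N + 1) ⊕ ι ≃ Fin (N' + 1)) : Continuous (L.liftMap e) := by
  have hbase : Continuous (baseCoords e) := continuous_pi fun v => continuous_apply _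
  have hweight : Continuous (apexWeight e) := continuous_finsetSum _ fun i _ => continuous_apply _
  have hheight : Continuous (L.liftHeight e) :=
    (L.continuous_baseHeight.comp hbase).add (hweight.const_mul _)
  have hinv : Continuous fun x => (max (1 - apexWeight e x) (1 / 2))⁻¹ :=
    ((continuous_const.sub hweight).max continuous_const).inv₀
      fun x => (lt_max_of_lt_right one_half_pos).ne'
  exact continuous_consEuc.comp
    (hheight.prodMk (L.family.continuous.comp (hheight.prodMk (hinv.smul hbase))))

variable {L}

lemma liftHeight_le_one (hx : x ∈ simpFace T) (hT : apexPart e T = ∅) : L.liftHeight e x ≤ 1 := by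
  have h0 := apexWeight_eq_zero hx hT
  have hbase : baseCoords e x ∈ stdSimp N := by
    refine ⟨fun v => hx.1.1 _, ?_⟩
    rw [sum_baseCoords hx.1, h0, sub_zero]
  rw [liftHeight, h0, mul_zero, add_zero]
  exact (L.baseHeight_le_height hbase.1).trans (L.height_le_one_of_mem_stdSimp hbase)

lemma exists_mem_simpFace_basePart {η : ℝ} {p : Euc d} (hx : x ∈ simpFace T) (hη : η ≤ 1)
    (hxp : L.liftMap e x = consEuc η p) :
    ∃ y ∈ simpFace (basePart e T), L.family (η, y) = p ∧
      L.baseHeight ((1 - apexWeight e x) • y) + L.apexHeight * apexWeight e x = η := by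
  obtain ⟨rfl, rfl⟩ := consEuc_inj.1 hxp
  have hhalf : apexWeight e x ≤ 1 / 2 := L.weight_le_half (fun v => hx.1.1 _) hη
  have hpos : 0 < 1 - apexWeight e x := by linarith
  refine ⟨_, inv_smul_baseCoords_mem_simpFace hx (sub_pos.1 hpos), ?_, ?_⟩
  · rw [max_eq_left (by linarith)]
  · rw [smul_inv_smul₀ hpos.ne', liftHeight]

variable {Q : Finset (Finset (Fin (N' + 1)))}

lemma exists_coincidence (hQ : IsDisjointFamily Q) (hcard : Fintype.card ι < Q.card)
    (hz : (commonPoints (L.liftMap e) Q).Nonempty) :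
    (∀ T ∈ Q, (basePart e T).Nonempty) ∧ ∃ c : L.Coincidence (Q.image (basePart e)),
      ∀ T ∈ Q, apexPart e T = ∅ → c.weight (basePart e T) = 0 := by
  obtain ⟨z, hz⟩ := hz
  choose! x hx hxz using mem_commonPoints.1 hz
  obtain ⟨T₀, hT₀, hT₀e⟩ := hQ.exists_apexPart_eq_empty (e := e) hcard
  obtain ⟨η, hη, p, rfl⟩ : ∃ η ≤ 1, ∃ p, z = consEuc η p :=
    ⟨_, liftHeight_le_one (hx T₀ hT₀) hT₀e, _, (hxz T₀ hT₀).symm⟩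
  choose! y hy hyp hyη using fun T hT =>
    exists_mem_simpFace_basePart (hx T hT) hη (hxz T hT)
  have hne : ∀ T ∈ Q, (basePart e T).Nonempty := fun T hT => nonempty_of_mem_simpFace (hy T hT)
  let t := Function.invFunOn (basePart e) Q
  have ht : ∀ T ∈ Q, t (basePart e T) = T := fun T hT =>
    (hQ.injOn_basePart hne).leftInvOn_invFunOn hT
  have hweight : ∀ T ∈ Q, apexPart e T = ∅ → apexWeight e (x (t (basePart e T))) = 0 :=
    fun T hT hTe => by rw [ht T hT]; exact apexWeight_eq_zero (hx T hT) hTe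
  refine ⟨hne, {
    point := p
    level := η
    weight := fun S => apexWeight e (x (t S))
    base := fun S => y (t S)
    level_le_one := hη
    weight_nonneg := Finset.forall_mem_image.2 fun T hT => ?_
    base_mem := Finset.forall_mem_image.2 fun T hT => ?_
    family_eq := Finset.forall_mem_image.2 fun T hT => ?_
    height_eq := Finset.forall_mem_image.2 fun T hT => ?_
    exists_weight_eq_zero := ⟨_, Finset.mem_image_of_mem _ hT₀, hweight T₀ hT₀ hT₀e⟩ }, hweight⟩
  all_goals rw [ht T hT]
  exacts [apexWeight_nonneg (hx T hT).1, hy T hT, hyp T hT, hyη T hT]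

lemma isWindingPartition_and_liesOver (hf : GenPos d f) (hd : 1 ≤ d)
    (hN : N ≤ (d + 1) * Fintype.card ι)
    (hQ : IsTverbergPartition (Fintype.card ι + 1) (L.liftMap e) Q) :
    IsWindingPartition d (Fintype.card ι + 1) f (Q.image (basePart e)) ∧
      ∀ S₀, IsLeadingSet (smallMembers d (Q.image (basePart e))) S₀ →
        LiesOver e (Q.image (basePart e)) S₀ Q := by
  obtain ⟨hcard, hQ, hz⟩ := isTverbergPartition_iff.1 hQ
  obtain ⟨hne, c, hc⟩ := exists_coincidence hQ (by omega) hz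
  have hP := hQ.image_basePart hne
  have hinj := hQ.injOn_basePart hne
  have hPcard : (Q.image (basePart e)).card = Fintype.card ι + 1 := by
    rw [Finset.card_image_of_injOn hinj, hcard]
  have hcodim := hP.le_totalCodim hPcard (by simpa using hN)
  refine ⟨hPcard ▸ c.isWindingPartition hf hd hP hcodim, fun S₀ hS₀ => ⟨hQ, rfl, ?_⟩⟩
  have hlead : ∀ T ∈ Q, apexPart e T = ∅ → basePart e T = S₀ := fun T hT hTe =>
    (c.isLeadingSet hf hd hP hcodim (Finset.mem_image_of_mem _ hT) (hc T hT hTe)).eq hS₀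
  obtain ⟨T₀, hT₀, hT₀e⟩ := hQ.exists_apexPart_eq_empty (e := e) (by omega)
  refine fun T hT => ⟨hlead T hT, fun h => ?_⟩
  rwa [hinj hT hT₀ (h.trans (hlead T₀ hT₀ hT₀e).symm)]

lemma ncard_isTverbergPartition_le (L : LiftData d f) (hf : GenPos d f) (hd : 1 ≤ d)
    (hN : N ≤ (d + 1) * Fintype.card ι) (e : Fin (N + 1) ⊕ ι ≃ Fin (N' + 1)) :
    {Q | IsTverbergPartition (Fintype.card ι + 1) (L.liftMap e) Q}.ncard ≤
      (Fintype.card ι).factorial * {P | IsWindingPartition d (Fintype.card ι + 1) f P}.ncard := by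
  classical
  rw [Set.ncard_eq_toFinset_card', Set.ncard_eq_toFinset_card']
  refine Finset.card_le_mul_card_image_of_maps_to (f := fun Q => Q.image (basePart e))
    (fun Q hQ => ?_) _ fun P hP => ?_
  · rw [Set.mem_toFinset] at hQ ⊢
    exact (isWindingPartition_and_liesOver hf hd hN hQ).1
  rw [Set.mem_toFinset] at hP
  obtain ⟨hcard, hP, -⟩ := isWindingPartition_iff.1 hP
  have hcodim := hP.le_totalCodim hcard (by simpa using hN)
  obtain ⟨S₀, hS₀⟩ := hP.smallMembers.exists_isLeadingSet (smallMembers_nonempty hd hcodim)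
  refine card_le_factorial_of_liesOver (e := e) hP (mem_smallMembers.1 hS₀.1).1 hcard
    fun Q hQ => ?_
  rw [Finset.mem_filter, Set.mem_toFinset] at hQ
  obtain ⟨hQ, rfl⟩ := hQ
  exact (isWindingPartition_and_liesOver hf hd hN hQ).2 S₀ hS₀

end LiftData

end LiftMap

section Equivalences

variable {N d q a n : ℕ} {f g : (Fin (N + 1) → ℝ) → Euc d} {P : Finset (Finset (Fin (N + 1)))}

lemma IsTverbergPartition.congr (h : EqOn f g (skel N d)) (hcard : ∀ S ∈ P, S.card ≤ d + 1)
    (hP : IsTverbergPartition q f P) : IsTverbergPartition q g P := by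
  obtain ⟨hq, hP, p, hp⟩ := isTverbergPartition_iff.1 hP
  refine isTverbergPartition_iff.2 ⟨hq, hP, p, mem_commonPoints.2 fun S hS => ?_⟩
  rw [← (h.mono (simpFace_subset_skel (hcard S hS))).image_eq]
  exact mem_commonPoints.1 hp S hS

lemma InWne.congr {S : Finset (Fin (N + 1))} {p : Euc d} (h : EqOn f g (simpFaceBoundary S))
    (hp : InWne d f S p) : InWne d g S p := by
  rw [InWne, ← h.image_eq]
  exact hp.imp_right fun hp ⟨φ, y, hφ, hy⟩ => hp ⟨φ, y, fun x => (hφ x).trans (h x.2).symm, hy⟩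

lemma IsWindingPartition.congr (hd : 1 ≤ d) (h : EqOn f g (skel N (d - 1)))
    (hP : IsWindingPartition d q f P) : IsWindingPartition d q g P := by
  obtain ⟨hq, hP, hcard, p, hp⟩ := isWindingPartition_iff.1 hP
  refine isWindingPartition_iff.2 ⟨hq, hP, hcard, p, fun S hS => ⟨fun hSd => ?_, fun hSd => ?_⟩⟩
  · rw [← (h.mono (simpFace_subset_skel (by omega))).image_eq]
    exact (hp S hS).1 hSd
  · exact ((hp S hS).2 hSd).congr (h.mono (simpFaceBoundary_subset_skel (by omega)))

lemma IsWindingPartition.isTverbergPartition (hf : ContinuousOn f (skel N d))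
    (hP : IsWindingPartition d q f P) : IsTverbergPartition q f P := by
  obtain ⟨hq, hP, hcard, p, hp⟩ := isWindingPartition_iff.1 hP
  refine isTverbergPartition_iff.2 ⟨hq, hP, p, mem_commonPoints.2 fun S hS => ?_⟩
  obtain hSd | hSd := (hcard S hS).lt_or_eq
  · exact (hp S hS).1 (Nat.le_of_lt_succ hSd)
  · exact ((hp S hS).2 hSd).mem_image_simpFace (hP.nonempty S hS)
      (hf.mono (simpFace_subset_skel (hcard S hS))) (eqOn_refl _ _)

lemma GenPos.card_le_of_isTverbergPartition (hf : GenPos d f) (hN : N ≤ (d + 1) * a)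
    (hP : IsTverbergPartition (a + 1) f P) {S : Finset (Fin (N + 1))} (hS : S ∈ P) :
    S.card ≤ d + 1 := by
  obtain ⟨hcard, hP, p, hp⟩ := isTverbergPartition_iff.1 hP
  exact hf.card_le hP (hP.le_totalCodim hcard (by simpa using hN))
    (biInter_subset_biInter_left (Finset.filter_subset _ _) hp) hS

lemma le_ncard_isTverbergPartition_of_continuousOn_skel (hN : N ≤ (d + 1) * a)
    (H : ∀ f : C(Fin (N + 1) → ℝ, Euc d), n ≤ {P | IsTverbergPartition (a + 1) f P}.ncard)
    (hf : ContinuousOn f (skel N d)) : n ≤ {P | IsTverbergPartition (a + 1) f P}.ncard := by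
  obtain ⟨F, hF⟩ := exists_continuousMap_eqOn (isClosed_skel N d) hf
  obtain ⟨G, hG, hGF⟩ := exists_genPos_forall_imp (isClosed_setOf_isTverbergPartition a) F
  exact (H G).trans <| ncard_le_ncard fun P hP =>
    (hGF P hP).congr hF fun S hS => hG.card_le_of_isTverbergPartition hN hP hS

lemma le_ncard_isWindingPartition_of_lift {N' : ℕ} (hd : 1 ≤ d) (hN : N ≤ (d + 1) * a)
    (hN' : N' = N + a)
    (H : ∀ F : C(Fin (N' + 1) → ℝ, Euc (d + 1)),
      a.factorial * n ≤ {Q | IsTverbergPartition (a + 1) F Q}.ncard)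
    (hf : ContinuousOn f (skel N (d - 1))) : n ≤ {P | IsWindingPartition d (a + 1) f P}.ncard := by
  obtain ⟨F, hF⟩ := exists_continuousMap_eqOn (isClosed_skel N (d - 1)) hf
  obtain ⟨G, hG, hGF⟩ := exists_genPos_forall_imp (isClosed_setOf_isWindingPartition hd hN) F
  obtain ⟨L⟩ := hG.nonempty_liftData hd
  let e : Fin (N + 1) ⊕ Fin a ≃ Fin (N' + 1) := finSumFinEquiv.trans (finCongr (by omega))
  have hle := L.ncard_isTverbergPartition_le hG hd (by simpa using hN) e
  rw [Fintype.card_fin] at hle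
  calc n ≤ {P | IsWindingPartition d (a + 1) G P}.ncard := Nat.le_of_mul_le_mul_left
        ((H ⟨_, L.continuous_liftMap e⟩).trans hle) a.factorial_pos
    _ ≤ {P | IsWindingPartition d (a + 1) f P}.ncard :=
        ncard_le_ncard fun P hP => (hGF P hP).congr hd hF

end Equivalences

end

/-- Sierksma's conjecture, its `d`-skeleton version, and its winding-partition
version are all equivalent. -/
theorem sierksma_equivalences :
    ((∀ d q : ℕ, 1 ≤ d → 1 ≤ q →
        ∀ f : (Fin ((d+1)*(q-1)+1) → ℝ) → Euc d,
          ContinuousOn f (stdSimp ((d+1)*(q-1))) →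
          (Nat.factorial (q-1))^d ≤
            {P : Finset (Finset (Fin ((d+1)*(q-1)+1))) |
              IsTverbergPartition q f P}.ncard) ↔
      (∀ d q : ℕ, 1 ≤ d → 1 ≤ q →
        ∀ f : (Fin ((d+1)*(q-1)+1) → ℝ) → Euc d,
          ContinuousOn f (skel ((d+1)*(q-1)) d) →
          (Nat.factorial (q-1))^d ≤
            {P : Finset (Finset (Fin ((d+1)*(q-1)+1))) |
              IsTverbergPartition q f P}.ncard)) ∧
    ((∀ d q : ℕ, 1 ≤ d → 1 ≤ q →
        ∀ f : (Fin ((d+1)*(q-1)+1) → ℝ) → Euc d,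
          ContinuousOn f (skel ((d+1)*(q-1)) d) →
          (Nat.factorial (q-1))^d ≤
            {P : Finset (Finset (Fin ((d+1)*(q-1)+1))) |
              IsTverbergPartition q f P}.ncard) ↔
      (∀ d q : ℕ, 1 ≤ d → 1 ≤ q →
        ∀ f : (Fin ((d+1)*(q-1)+1) → ℝ) → Euc d,
          ContinuousOn f (skel ((d+1)*(q-1)) (d-1)) →
          (Nat.factorial (q-1))^d ≤
            {P : Finset (Finset (Fin ((d+1)*(q-1)+1))) |
              IsWindingPartition d q f P}.ncard)) := by
  refine ⟨⟨fun H d q hd hq f hf => ?_, fun H d q hd hq f hf =>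
    H d q hd hq f (hf.mono fun _ hx => hx.1)⟩, fun H d q hd hq f hf => ?_,
    fun H d q hd hq f hf => ?_⟩
  · obtain ⟨a, rfl⟩ := Nat.exists_eq_add_of_le' hq
    exact le_ncard_isTverbergPartition_of_continuousOn_skel le_rfl
      (fun F => H d (a + 1) hd hq F F.continuous.continuousOn) hf
  · obtain ⟨a, rfl⟩ := Nat.exists_eq_add_of_le' hq
    refine le_ncard_isWindingPartition_of_lift hd le_rfl
      (Nat.add_one_mul (d + 1) a) (fun F => ?_) hf
    rw [Nat.add_sub_cancel, ← pow_succ']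
    exact H (d + 1) (a + 1) (Nat.le_add_left 1 d) hq F F.continuous.continuousOn
  · exact (H d q hd hq f (hf.mono (skel_mono _ (Nat.sub_le d 1)))).trans
      (Set.ncard_le_ncard fun P hP => hP.isTverbergPartition hf)
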